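/- Let Γ be a generalised hexagon of finite order (s,t) with s > 1 and t > 1, and let S be a set of s+1 points of Γ such that no point of Γ is opposite every member of S. Then S is either (i) the point set of a line of Γ, or (ii) a hyperbolic line of Γ, in which case s = t, or (iii) a regular distance-3 trace of Γ, in which case s ≥ t. -/

import Mathlib

/-- An incidence structure of points and lines, each line being a set of points. -/
structure GenHexagon where
  Point : Type
  Line : Type
  pts : Line → Set Point

namespace GenHexagon

variable (Γ : GenHexagon)

/-- Adjacency of the bipartite incidence graph on the disjoint union of points and lines:
a point is adjacent to a line iff the point lies on the line. -/
def incAdj : Γ.Point ⊕ Γ.Line → Γ.Point ⊕ Γ.Line → Prop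
  | Sum.inl x, Sum.inr L => x ∈ Γ.pts L
  | Sum.inr L, Sum.inl x => x ∈ Γ.pts L
  | _, _ => False

/-- The bipartite incidence graph. -/
def incGraph : SimpleGraph (Γ.Point ⊕ Γ.Line) where
  Adj := Γ.incAdj
  symm := ⟨by rintro (x | L) (y | M) h <;> simp_all [incAdj]⟩
  loopless := ⟨by rintro (x | L) h <;> simp_all [incAdj]⟩

/-- `Γ` is a generalised hexagon: its incidence graph has diameter `6` and girth `12`. -/
def IsGenHexagon : Prop :=
  Γ.incGraph.ediam = 6 ∧ Γ.incGraph.egirth = 12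

/-- Two points are collinear if they are distinct and some line contains both. -/
def Collinear (x y : Γ.Point) : Prop :=
  x ≠ y ∧ ∃ L, x ∈ Γ.pts L ∧ y ∈ Γ.pts L

/-- Two points are special if they are distinct, non-collinear, and collinear
to a common point. -/
def Special (x y : Γ.Point) : Prop :=
  x ≠ y ∧ ¬ Γ.Collinear x y ∧ ∃ z, Γ.Collinear x z ∧ Γ.Collinear y z

/-- Two points are opposite if they are distinct, non-collinear and non-special. -/
def Opposite (x y : Γ.Point) : Prop :=
  x ≠ y ∧ ¬ Γ.Collinear x y ∧ ¬ Γ.Special x y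

/-- `Γ` has order `(s, t)`: every line contains exactly `s + 1` points and every
point lies on exactly `t + 1` lines. -/
def HasOrder (s t : ℕ) : Prop :=
  (∀ L, (Γ.pts L).encard = s + 1) ∧ (∀ x, {L | x ∈ Γ.pts L}.encard = t + 1)

/-- `Γ` is thick: every line contains at least `3` points and every point lies on
at least `3` lines. -/
def Thick : Prop :=
  (∀ L, 3 ≤ (Γ.pts L).encard) ∧ (∀ x, 3 ≤ {L | x ∈ Γ.pts L}.encard)

/-- A point is close to a line if it is collinear to exactly one point of that line. -/
def CloseTo (x : Γ.Point) (L : Γ.Line) : Prop :=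
  ∃! y, y ∈ Γ.pts L ∧ Γ.Collinear x y

/-- Two lines are opposite if they are disjoint and no point of one is collinear to
a point of the other. -/
def OppLines (L M : Γ.Line) : Prop :=
  (∀ x ∈ Γ.pts L, x ∉ Γ.pts M) ∧
  (∀ x ∈ Γ.pts L, ∀ y ∈ Γ.pts M, ¬ Γ.Collinear x y)

/-- The distance-3 trace `[L,M]₃` of two (opposite) lines: the set of points close to
both `L` and `M`. -/
def trace3 (L M : Γ.Line) : Set Γ.Point :=
  {x | Γ.CloseTo x L ∧ Γ.CloseTo x M}

/-- The distance-3 trace `[L,M]₃` is regular if `[N,M]₃ = [L,M]₃` for every line `N`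
opposite `M` such that `[N,M]₃` and `[L,M]₃` share at least two points. -/
def RegularTrace3 (L M : Γ.Line) : Prop :=
  ∀ N, Γ.OppLines N M → (Γ.trace3 N M ∩ Γ.trace3 L M).Nontrivial →
    Γ.trace3 N M = Γ.trace3 L M

/-- A hyperbolic line: a set `H` of pairwise special points, all collinear to a common
point `p`, such that for every point `q` opposite `p` to which at least two points of `H`
are special, the set of points special to `q` and collinear to `p` equals `H`. -/
def IsHyperbolicLine (H : Set Γ.Point) : Prop :=
  (∀ x ∈ H, ∀ y ∈ H, x ≠ y → Γ.Special x y) ∧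
  ∃ p, (∀ x ∈ H, Γ.Collinear x p) ∧
    ∀ q, Γ.Opposite q p → {x ∈ H | Γ.Special q x}.Nontrivial →
      {x | Γ.Special q x ∧ Γ.Collinear x p} = H

/-- A round-up triple: no point of `Γ` is opposite exactly one of `x₁, x₂, x₃`. -/
def RoundUpTriple (x₁ x₂ x₃ : Γ.Point) : Prop :=
  ∀ y : Γ.Point,
    ¬ ((Γ.Opposite y x₁ ∧ ¬ Γ.Opposite y x₂ ∧ ¬ Γ.Opposite y x₃) ∨
       (¬ Γ.Opposite y x₁ ∧ Γ.Opposite y x₂ ∧ ¬ Γ.Opposite y x₃) ∨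
       (¬ Γ.Opposite y x₁ ∧ ¬ Γ.Opposite y x₂ ∧ Γ.Opposite y x₃))

/-- A geometric line: a set `T` of points such that each point of `Γ` is either opposite
no member of `T`, or non-opposite to exactly one member of `T`. -/
def IsGeometricLine (T : Set Γ.Point) : Prop :=
  ∀ y : Γ.Point, (∀ x ∈ T, ¬ Γ.Opposite y x) ∨ (∃! x, x ∈ T ∧ ¬ Γ.Opposite y x)

end GenHexagon

/-!
The basic tool is the pigeonhole principle: an injective relation from a set to an equinumerous
finite set that is total on the first is a bijection. Comparing `S` with the points of a line
through a point `a` collinear to two members of `S`, it shows that every such line meets `S`.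

Suppose that two members of `S` lie on a line `L`. If `z` is a point of `L` outside `S`, then each
of the two or more further lines through `z` contains a member of `S` outside `L`; but collinearity
matches the points of `L` outside `S` with the members of `S` outside `L`. So `S = L`.

If no two members of `S` are collinear, consider the centres of `S`, the points collinear to at
least two of its members. Without centres the members of `S` are pairwise opposite and form a
regular trace. If some centre is collinear to all of `S`, then `S` is a hyperbolic line. Otherwise
every line meeting `S` contains a centre, and `S` together with its centres is a subhexagon of some
order `(e, t)`, each of whose lines contains exactly one member of `S`; counting lines yields
`s = (e * t) ^ 2 + e * t`. This contradicts the Feit–Higman conditions: for `e = 1` the integrality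
of the multiplicity of the eigenvalue `-(t + 1)` of the collinearity matrix fails, and for `1 < e`
both `s * t` and `e * t` are squares, hence so are the consecutive numbers `e * t` and `e * t + 1`.
-/

theorem eq_of_isPath_of_length_add_lt_egirth {V : Type*} {G : SimpleGraph V} {u v : V}
    {p q : G.Walk u v} (hp : p.IsPath) (hq : q.IsPath)
    (h : (p.length + q.length : ℕ) < G.egirth) : p = q := by
  classical
  induction p with
  | nil => exact (SimpleGraph.Walk.isPath_iff_nil.1 hq).eq_nil.symm
  | @cons u w v huw p ih =>
    obtain ⟨hp, hup⟩ := SimpleGraph.Walk.cons_isPath_iff huw p |>.1 hp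
    have edge_mem : s(u, w) ∈ q.edges := by
      by_contra hqe
      let r := (q.append p.reverse).bypass
      have hr : s(u, w) ∉ r.edges := fun hr => by
        have := SimpleGraph.Walk.edges_bypass_subset_edges _ hr
        simp only [SimpleGraph.Walk.edges_append, SimpleGraph.Walk.edges_reverse,
          List.mem_append, List.mem_reverse, hqe, false_or] at this
        exact hup (p.fst_mem_support_of_mem_edges this)
      have hcycle : (SimpleGraph.Walk.cons huw.symm r).IsCycle :=
        SimpleGraph.Walk.cons_isCycle_iff _ _ |>.2
          ⟨SimpleGraph.Walk.bypass_isPath _, Sym2.eq_swap ▸ hr⟩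
      have hlen : r.length ≤ q.length + p.length := by
        simpa using (q.append p.reverse).length_bypass_le_length
      refine absurd h (not_lt.2 ((SimpleGraph.egirth_le_length hcycle).trans ?_))
      simp only [SimpleGraph.Walk.length_cons]
      exact_mod_cast (by omega)
    cases q with
    | nil => simp at edge_mem
    | @cons _ w' _ huw' q =>
      obtain ⟨hq, huq⟩ := SimpleGraph.Walk.cons_isPath_iff huw' q |>.1 hq
      obtain rfl : w' = w := by
        rw [SimpleGraph.Walk.edges_cons, List.mem_cons] at edge_mem
        rcases edge_mem with h | h
        · exact (Sym2.congr_right.1 h).symm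
        · exact absurd (q.fst_mem_support_of_mem_edges h) huq
      rw [ih hp hq (lt_of_le_of_lt (by simp; norm_cast; omega) h)]

theorem encard_le_encard_of_rel {α β : Type*} {r : α → β → Prop} {A : Set α} {B : Set β}
    (total : ∀ a ∈ A, ∃ b ∈ B, r a b)
    (inj : ∀ a ∈ A, ∀ a' ∈ A, ∀ b ∈ B, r a b → r a' b → a = a') : A.encard ≤ B.encard := by
  choose f hf hr using total
  let g : A → B := fun a => ⟨f a a.2, hf a a.2⟩
  have hg : Function.Injective g := fun a a' h => by
    have h : f a a.2 = f a' a'.2 := congrArg Subtype.val h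
    exact Subtype.ext (inj a a.2 a' a'.2 _ (hf a a.2) (hr a a.2) (h ▸ hr a' a'.2))
  exact (⟨g, hg⟩ : A ↪ B).encard_le

theorem exists_rel_of_encard_le {α β : Type*} {r : α → β → Prop} {A : Set α} {B : Set β}
    (total : ∀ a ∈ A, ∃ b ∈ B, r a b)
    (inj : ∀ a ∈ A, ∀ a' ∈ A, ∀ b ∈ B, r a b → r a' b → a = a') (hB : B.Finite)
    (hBA : B.encard ≤ A.encard) {b : β} (hb : b ∈ B) : ∃ a ∈ A, r a b := by
  by_contra! hno
  have hle : A.encard ≤ (B \ {b}).encard := by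
    refine encard_le_encard_of_rel (r := r) (fun a ha => ?_) fun a ha a' ha' b' hb' =>
      inj a ha a' ha' b' hb'.1
    obtain ⟨b', hb', hab'⟩ := total a ha
    exact ⟨b', ⟨hb', fun h => hno a ha (h ▸ hab')⟩, hab'⟩
  have hlt : (B \ {b}).encard < B.encard :=
    (hB.subset Set.sdiff_subset).encard_lt_encard (Set.sdiff_singleton_ssubset.2 hb)
  exact absurd (hBA.trans hle) (not_le.2 hlt)

theorem eq_of_rel_of_encard_le {α β : Type*} {r : α → β → Prop} {A : Set α} {B : Set β}
    (total : ∀ a ∈ A, ∃ b ∈ B, r a b)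
    (inj : ∀ a ∈ A, ∀ a' ∈ A, ∀ b ∈ B, r a b → r a' b → a = a') (hB : B.Finite)
    (hBA : B.encard ≤ A.encard) {a : α} {b b' : β} (ha : a ∈ A) (hb : b ∈ B) (hb' : b' ∈ B)
    (hab : r a b) (hab' : r a b') : b = b' := by
  -- Forget all partners of `a` other than `b`: the relation that is left still reaches `b'`.
  obtain ⟨c, hc, hcb', hcb⟩ := exists_rel_of_encard_le (r := fun x y => r x y ∧ (x = a → y = b))
    (fun x hx => by
      by_cases hxa : x = a
      · exact ⟨b, hb, hxa ▸ hab, fun _ => rfl⟩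
      · obtain ⟨y, hy, hxy⟩ := total x hx
        exact ⟨y, hy, hxy, fun h => absurd h hxa⟩)
    (fun x hx x' hx' y hy hxy hxy' => inj x hx x' hx' y hy hxy.1 hxy'.1) hB hBA hb'
  exact (hcb (inj c hc a ha b' hb' hcb' hab')).symm

theorem exists_mem_ne_ne_of_two_lt_encard {α : Type*} {A : Set α} (hA : 2 < A.encard) (a b : α) :
    ∃ c ∈ A, c ≠ a ∧ c ≠ b := by
  by_contra! hno
  have hsub : A ⊆ {a, b} := fun c hc => or_iff_not_imp_left.2 (hno c hc)
  exact absurd ((Set.encard_le_encard hsub).trans (Set.encard_insert_le _ _)) (by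
    rw [Set.encard_singleton, one_add_one_eq_two]
    exact not_le.2 hA)

theorem card_mul_eq_card_mul_of_ncard {α β : Type*} [Finite α] [Finite β] (r : α → β → Prop)
    {m n : ℕ} (hm : ∀ a, {b | r a b}.ncard = m) (hn : ∀ b, {a | r a b}.ncard = n) :
    Nat.card α * m = Nat.card β * n := by
  classical
  have := Fintype.ofFinite α
  have := Fintype.ofFinite β
  rw [Nat.card_eq_fintype_card, Nat.card_eq_fintype_card, ← Finset.card_univ, ← Finset.card_univ]
  refine Finset.card_mul_eq_card_mul r (fun a _ => ?_) fun b _ => ?_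
  · simp [← hm a, ← Set.ncard_coe_finset, Finset.bipartiteAbove]
  · simp [← hn b, ← Set.ncard_coe_finset, Finset.bipartiteBelow]

theorem isSquare_of_mul_sq_eq_sq {m : ℕ} {a b : ℤ} (ha : a ≠ 0)
    (h : (m : ℤ) * a ^ 2 = b ^ 2) : IsSquare m := by
  obtain ⟨c, rfl⟩ : a ∣ b := (Int.pow_dvd_pow_iff two_ne_zero).1 ⟨m, by rw [← h]; ring⟩
  have hm : (m : ℤ) = c * c := mul_right_cancel₀ (pow_ne_zero 2 ha) (by rw [h]; ring)
  exact Int.isSquare_natCast_iff.1 ⟨c, hm⟩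

theorem eq_zero_of_isSquare_of_isSquare_succ {n : ℕ} (h₁ : IsSquare n) (h₂ : IsSquare (n + 1)) :
    n = 0 := by
  obtain ⟨a, rfl⟩ := h₁
  obtain ⟨b, hb⟩ := h₂
  have hab : a < b := by nlinarith
  have ha : a = 0 := by nlinarith
  rw [ha]

theorem isSquare_succ_of_eq_sq_add_self {s t e : ℕ} (ht : 0 < t) (hst : s = (e * t) ^ 2 + e * t)
    (h : IsSquare (s * t)) : IsSquare (e * t + 1) := by
  obtain ⟨c, hc⟩ := h
  have hsq : IsSquare (e * (e * t + 1)) :=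
    isSquare_of_mul_sq_eq_sq (a := t) (b := c) (by exact_mod_cast ht.ne') (by
      exact_mod_cast (by rw [sq c, ← hc, hst]; ring : e * (e * t + 1) * t ^ 2 = c ^ 2))
  obtain ⟨d, hd⟩ := hsq
  obtain ⟨r, hr⟩ := exists_eq_pow_of_mul_eq_pow (a := e * t + 1) (b := e) (c := d) (k := 2)
    (Nat.isUnit_iff.2 (by simp [gcd_eq_nat_gcd])) (by rw [sq d, ← hd, mul_comm])
  exact ⟨r, by rw [hr, sq]⟩

theorem not_dvd_of_eq_sq_add_self {s t : ℕ} (ht : 1 < t) (hst : s = t ^ 2 + t) :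
    ¬ s ^ 2 + s * t + t ^ 2 ∣ s ^ 3 * (1 + s * t + s ^ 2 * t ^ 2) := by
  subst hst
  intro hdvd
  have hdvd_mul : t ^ 2 * (t ^ 2 + 3 * t + 3) ∣
      t ^ 2 * (t * (t + 1) ^ 3 * (1 + t ^ 2 * (t + 1) + t ^ 4 * (t + 1) ^ 2)) := by
    convert hdvd using 1 <;> ring
  -- Polynomial division by `t ^ 2 + 3 * t + 3` leaves a linear remainder.
  have hrem : t ^ 2 + 3 * t + 3 ∣ 4 * (5 * t + 9) := by
    have := Nat.dvd_of_mul_dvd_mul_left (by positivity) hdvd_mul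
    zify at this ⊢
    refine (dvd_add_right this).1 ⟨(t : ℤ) ^ 8 + 2 * t ^ 7 + t ^ 6 + 2 * t ^ 5 + t ^ 3 +
      2 * t ^ 2 - 5 * t + 12, by ring⟩
  have hle := Nat.le_of_dvd (by positivity) hrem
  have hlt : t < 19 := by nlinarith
  interval_cases t <;> revert hrem <;> decide

theorem sum_comp_eq_card_mul {ι α R : Type*} [Fintype ι] [DecidableEq α] [NonAssocSemiring R]
    (v : ι → α) (f : α → R) (a : α) (h : ∀ i, v i ≠ a → f (v i) = 0) :
    ∑ i, f (v i) = (({i | v i = a} : Finset ι).card : R) * f a := by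
  rw [← nsmul_eq_mul, ← Finset.sum_const, Finset.sum_filter]
  refine Finset.sum_congr rfl fun i _ => ?_
  split_ifs with hi
  · rw [hi]
  · exact h i hi

theorem exists_sum_eq_intCast_mul {ι R : Type*} [Ring R] {A : Finset ι} {f : ι → R} {r : R}
    (h : ∀ i ∈ A, f i = r ∨ f i = -r) : ∃ n : ℤ, ∑ i ∈ A, f i = n * r := by
  refine Finset.sum_induction f (fun x => ∃ n : ℤ, x = n * r) ?_ ⟨0, by simp⟩ fun i hi => ?_
  · rintro _ _ ⟨m, rfl⟩ ⟨n, rfl⟩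
    exact ⟨m + n, by rw [Int.cast_add, add_mul]⟩
  · rcases h i hi with h | h
    · exact ⟨1, by simpa using h⟩
    · exact ⟨-1, by simpa using h⟩

section Spectrum

open Polynomial

theorem aeval_diagonal {n R : Type*} [Fintype n] [DecidableEq n] [CommRing R] (d : n → R)
    (q : R[X]) : aeval (Matrix.diagonal d) q = Matrix.diagonal fun i => q.eval (d i) := by
  have h := aeval_algHom_apply (Matrix.diagonalAlgHom R (n := n)) d q
  simp only [Matrix.diagonalAlgHom_apply] at h
  rw [h]
  congr 1
  ext i
  rw [← coe_aeval_eq_eval]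
  exact (aeval_algHom_apply (Pi.evalAlgHom R (fun _ : n => R) i) d q).symm

theorem exists_trace_aeval_eq_sum_of_isHermitian {n : Type*} [Fintype n] [DecidableEq n]
    {A : Matrix n n ℝ} (hA : A.IsHermitian) : ∃ ev : n → ℝ,
    (∀ q : ℝ[X], (aeval A q).trace = ∑ i, q.eval (ev i)) ∧
    ∀ q : ℝ[X], aeval A q = 0 → ∀ i, q.eval (ev i) = 0 := by
  have conj_diagonal (q : ℝ[X]) : aeval A q = Unitary.conjStarAlgAut ℝ _ hA.eigenvectorUnitary
      (Matrix.diagonal fun i => q.eval (hA.eigenvalues i)) := by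
    rw [← aeval_diagonal, ← aeval_algHom_apply]
    exact congrArg (aeval · q) hA.spectral_theorem
  refine ⟨hA.eigenvalues, fun q => ?_, fun q hq i => ?_⟩
  · rw [conj_diagonal, Unitary.conjStarAlgAut_apply, Matrix.trace_mul_cycle,
      Unitary.coe_star_mul_self, one_mul, Matrix.trace_diagonal]
  · rw [conj_diagonal, EmbeddingLike.map_eq_zero_iff, Matrix.diagonal_eq_zero] at hq
    exact congrFun hq i

end Spectrum

/-- The family `ev` has the cardinality, power sums and possible values of the eigenvalues, with
multiplicity, of the collinearity matrix of a generalised hexagon of order `(s, t)`: the values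
are the valency `s (t + 1)`, `-(t + 1)` and `s - 1 ± √(s t)`. -/
structure IsHexSpectrum {ι : Type*} [Fintype ι] (s t : ℕ) (ev : ι → ℝ) : Prop where
  card_eq : (Fintype.card ι : ℝ) = (s + 1) * (1 + s * t + s ^ 2 * t ^ 2)
  sum_eq : ∑ i, ev i = 0
  sum_sq_eq : ∑ i, ev i ^ 2 = Fintype.card ι * (s * (t + 1))
  sum_cube_eq : ∑ i, ev i ^ 3 = Fintype.card ι * (s * (t + 1)) * (s - 1)
  root : ∀ i, (ev i - s * (t + 1)) * ((ev i + (t + 1)) * ((ev i - (s - 1)) ^ 2 - s * t)) = 0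

namespace IsHexSpectrum

variable {ι : Type*} [Fintype ι] {s t : ℕ} {ev : ι → ℝ}

theorem sum_cubic (h : IsHexSpectrum s t ev) (a b c : ℝ) :
    ∑ i, (ev i ^ 3 + a * ev i ^ 2 + b * ev i + c) =
      Fintype.card ι * (s * (t + 1) * (s - 1 + a) + c) := by
  simp only [Finset.sum_add_distrib, ← Finset.mul_sum, h.sum_eq, h.sum_sq_eq, h.sum_cube_eq,
    Finset.sum_const, Finset.card_univ, nsmul_eq_mul]
  ring

theorem card_eq_valency (h : IsHexSpectrum s t ev) :
    (({i | ev i = s * (t + 1)} : Finset ι).card : ℝ) = 1 := by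
  -- The other three values are roots of this cubic.
  have hcard := sum_comp_eq_card_mul ev (fun x => (x + (t + 1)) * ((x - (s - 1)) ^ 2 - s * t))
    (s * (t + 1)) fun i hi => (mul_eq_zero.1 (h.root i)).resolve_left (sub_ne_zero.2 hi)
  have hsum := h.sum_cubic (t + 1 - 2 * (s - 1)) ((s - 1) ^ 2 - s * t - 2 * (s - 1) * (t + 1))
    ((t + 1) * ((s - 1) ^ 2 - s * t))
  rw [Finset.sum_congr rfl fun i _ => show _ = (ev i + (t + 1)) * ((ev i - (s - 1)) ^ 2 - s * t)
    by ring, hcard, h.card_eq] at hsum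
  have hpos : (0 : ℝ) < (s + 1) * (t + 1) * (1 + s * t + s ^ 2 * t ^ 2) := by positivity
  exact mul_right_cancel₀ hpos.ne' (by linear_combination hsum)

theorem card_eq_neg_mul (h : IsHexSpectrum s t ev) :
    (({i | ev i = -(t + 1)} : Finset ι).card : ℝ) * (s ^ 2 + s * t + t ^ 2) =
      s ^ 3 * (1 + s * t + s ^ 2 * t ^ 2) := by
  have hcard := sum_comp_eq_card_mul ev
    (fun x => (x - s * (t + 1)) * ((x - (s - 1)) ^ 2 - s * t)) (-(t + 1)) fun i hi =>
      (mul_eq_zero.1 ((mul_left_comm ..).trans (h.root i))).resolve_left fun e =>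
        hi (eq_neg_of_add_eq_zero_left e)
  have hsum := h.sum_cubic (-(s * (t + 1)) - 2 * (s - 1))
    ((s - 1) ^ 2 - s * t + 2 * (s - 1) * (s * (t + 1)))
    (-(s * (t + 1)) * ((s - 1) ^ 2 - s * t))
  rw [Finset.sum_congr rfl fun i _ => show _ = (ev i - s * (t + 1)) *
    ((ev i - (s - 1)) ^ 2 - s * t) by ring, hcard, h.card_eq] at hsum
  have hpos : (0 : ℝ) < (s + 1) * (t + 1) := by positivity
  exact mul_right_cancel₀ hpos.ne' (by linear_combination -hsum)

theorem dvd (h : IsHexSpectrum s t ev) :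
    s ^ 2 + s * t + t ^ 2 ∣ s ^ 3 * (1 + s * t + s ^ 2 * t ^ 2) :=
  Dvd.intro_left ({i | ev i = -(t + 1)} : Finset ι).card (by exact_mod_cast h.card_eq_neg_mul)

theorem sub_eq_sqrt_or (h : IsHexSpectrum s t ev) {i : ι} (hk : ev i ≠ s * (t + 1))
    (hn : ev i ≠ -(t + 1)) :
    ev i - (s - 1) = √(s * t : ℝ) ∨ ev i - (s - 1) = -√(s * t : ℝ) := by
  have hquad := (mul_eq_zero.1 ((mul_eq_zero.1 (h.root i)).resolve_left
    (sub_ne_zero.2 hk))).resolve_left fun e => hn (eq_neg_of_add_eq_zero_left e)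
  rwa [← Real.sq_sqrt (by positivity : (0 : ℝ) ≤ s * t), sub_eq_zero,
    sq_eq_sq_iff_eq_or_eq_neg] at hquad

theorem exists_int_mul_sqrt_eq (h : IsHexSpectrum s t ev) : ∃ n : ℤ,
    (n * (s ^ 2 + s * t + t ^ 2)) * √(s * t : ℝ) =
      -(s ^ 2 * t ^ 2 * (s ^ 2 - 1) * (t ^ 2 - 1)) := by
  let K : Finset ι := {i | ev i = s * (t + 1)}
  let N : Finset ι := {i | ev i = -(t + 1)}
  have hKN : Disjoint K N := Finset.disjoint_filter.2 fun i _ hi hi' => by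
    have : (0 : ℝ) < s * (t + 1) + (t + 1) := by positivity
    linarith
  classical
  obtain ⟨n, hn⟩ := exists_sum_eq_intCast_mul (A := (K ∪ N)ᶜ) (f := fun i => ev i - (s - 1))
    (r := √(s * t : ℝ)) fun i hi => by
      simp only [K, N, Finset.mem_compl, Finset.mem_union, Finset.mem_filter, Finset.mem_univ,
        true_and, not_or] at hi
      exact h.sub_eq_sqrt_or hi.1 hi.2
  have hK : ∑ i ∈ K, (ev i - (s - 1)) = s * t + 1 := by
    rw [Finset.sum_congr rfl fun i hi => by rw [(Finset.mem_filter.1 hi).2], Finset.sum_const,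
      nsmul_eq_mul, h.card_eq_valency]
    ring
  have hN : ∑ i ∈ N, (ev i - (s - 1)) = N.card * -(s + t : ℝ) := by
    rw [Finset.sum_congr rfl fun i hi => by rw [(Finset.mem_filter.1 hi).2], Finset.sum_const,
      nsmul_eq_mul]
    ring
  have hsum : ∑ i, (ev i - (s - 1)) = -((s + 1) * (1 + s * t + s ^ 2 * t ^ 2) * (s - 1)) := by
    rw [Finset.sum_sub_distrib, h.sum_eq, Finset.sum_const, Finset.card_univ, nsmul_eq_mul,
      h.card_eq]
    ring
  rw [← Finset.sum_add_sum_compl (K ∪ N), Finset.sum_union hKN, hn, hK, hN] at hsum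
  exact ⟨n, by linear_combination (s ^ 2 + s * t + t ^ 2 : ℝ) * hsum +
    (s + t : ℝ) * h.card_eq_neg_mul⟩

theorem isSquare (h : IsHexSpectrum s t ev) (hs : 1 < s) (ht : 1 < t) : IsSquare (s * t) := by
  obtain ⟨n, hn⟩ := h.exists_int_mul_sqrt_eq
  have sq_sub_one_ne_zero {m : ℕ} (hm : 1 < m) : (m : ℤ) ^ 2 - 1 ≠ 0 := by
    have : (1 : ℤ) < m := by exact_mod_cast hm
    nlinarith
  have hne : -((s : ℤ) ^ 2 * t ^ 2 * (s ^ 2 - 1) * (t ^ 2 - 1)) ≠ 0 := by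
    simp [sq_sub_one_ne_zero hs, sq_sub_one_ne_zero ht, (zero_lt_one.trans hs).ne',
      (zero_lt_one.trans ht).ne']
  refine isSquare_of_mul_sq_eq_sq (a := n * (s ^ 2 + s * t + t ^ 2))
    (b := -(s ^ 2 * t ^ 2 * (s ^ 2 - 1) * (t ^ 2 - 1))) (fun hzero => hne ?_) ?_
  · rw [show (n * (s ^ 2 + s * t + t ^ 2) : ℝ) = 0 by exact_mod_cast hzero, zero_mul] at hn
    exact_mod_cast hn.symm
  · have hsq := congrArg (· ^ 2) hn
    simp only [mul_pow _ (√(s * t : ℝ)), Real.sq_sqrt (by positivity : (0 : ℝ) ≤ s * t)] at hsq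
    rw [mul_comm] at hsq
    exact_mod_cast hsq

end IsHexSpectrum

section RelMatrix

open Classical in
/-- The real `0`-`1` matrix of a binary relation. -/
noncomputable def relMatrix {α : Type*} (r : α → α → Prop) : Matrix α α ℝ :=
  Matrix.of fun x y => if r x y then 1 else 0

variable {α : Type*} {r r' : α → α → Prop} {x y : α}

theorem relMatrix_apply_of (h : r x y) : relMatrix r x y = 1 := if_pos h

theorem relMatrix_apply_of_not (h : ¬ r x y) : relMatrix r x y = 0 := if_neg h

theorem relMatrix_mul_apply [Fintype α] :
    (relMatrix r * relMatrix r') x y = ({z | r x z ∧ r' z y}.ncard : ℝ) := by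
  classical
  have apply_mul_apply (z : α) :
      relMatrix r x z * relMatrix r' z y = if r x z ∧ r' z y then 1 else 0 := by
    by_cases h : r x z <;> by_cases h' : r' z y <;> simp [relMatrix, h, h']
  rw [Matrix.mul_apply, Finset.sum_congr rfl fun z _ => apply_mul_apply z, Finset.sum_boole,
    Set.ncard_eq_toFinset_card']
  simp

theorem isHermitian_relMatrix (h : ∀ x y, r x y → r y x) : (relMatrix r).IsHermitian := by
  ext x y
  by_cases hxy : r x y
  · simp [relMatrix_apply_of hxy, relMatrix_apply_of (h _ _ hxy)]
  · simp [relMatrix_apply_of_not hxy, relMatrix_apply_of_not fun h' => hxy (h _ _ h')]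

theorem trace_relMatrix_eq_zero [Fintype α] (h : ∀ x, ¬ r x x) : (relMatrix r).trace = 0 :=
  Finset.sum_eq_zero fun x _ => relMatrix_apply_of_not (h x)

theorem relMatrix_mul_relMatrix_true [Fintype α] {k : ℕ} (h : ∀ x, {z | r x z}.ncard = k) :
    relMatrix r * relMatrix (fun _ _ => True) = (k : ℝ) • relMatrix fun _ _ => True := by
  ext x y
  rw [relMatrix_mul_apply, Matrix.smul_apply, relMatrix_apply_of trivial]
  simp [h]

theorem relMatrix_true_ne_zero [Nonempty α] : relMatrix (fun _ _ : α => True) ≠ 0 := fun e => by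
  have x := Classical.arbitrary α
  have := congrFun (congrFun e x) x
  rw [relMatrix_apply_of trivial] at this
  exact one_ne_zero this

end RelMatrix

namespace GenHexagon

variable {Γ : GenHexagon}

theorem Collinear.symm {x y : Γ.Point} (h : Γ.Collinear x y) : Γ.Collinear y x :=
  ⟨h.1.symm, h.2.imp fun _ h => h.symm⟩

/-- The combinatorial form of the hexagon conditions: there are no ordinary `k`-gons for `k ≤ 5`,
and every line has a point that is not opposite a given point. -/
structure IsHex (Γ : GenHexagon) : Prop where
  line_unique : ∀ {x y : Γ.Point} {L M : Γ.Line}, x ≠ y → x ∈ Γ.pts L → y ∈ Γ.pts L →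
    x ∈ Γ.pts M → y ∈ Γ.pts M → L = M
  no_triangle : ∀ {x a b : Γ.Point} {L : Γ.Line}, a ≠ b → a ∈ Γ.pts L → b ∈ Γ.pts L →
    Γ.Collinear x a → Γ.Collinear x b → x ∈ Γ.pts L
  no_quadrangle : ∀ {x y z w : Γ.Point}, x ≠ y → ¬ Γ.Collinear x y → Γ.Collinear x z →
    Γ.Collinear y z → Γ.Collinear x w → Γ.Collinear y w → z = w
  no_pentagon : ∀ {x a b : Γ.Point} {L : Γ.Line}, a ≠ b → a ∈ Γ.pts L → b ∈ Γ.pts L →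
    Γ.Special x a → Γ.Special x b → ∃ c ∈ Γ.pts L, Γ.Collinear x c
  exists_not_opposite : ∀ (x : Γ.Point) (L : Γ.Line), ∃ y ∈ Γ.pts L, ¬ Γ.Opposite x y

section IncidenceGraph

theorem incGraph_adj_point_line {x : Γ.Point} {L : Γ.Line} :
    Γ.incGraph.Adj (Sum.inl x) (Sum.inr L) ↔ x ∈ Γ.pts L := Iff.rfl

theorem incGraph_adj_line_point {x : Γ.Point} {L : Γ.Line} :
    Γ.incGraph.Adj (Sum.inr L) (Sum.inl x) ↔ x ∈ Γ.pts L := Iff.rfl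

/-- The walk `x, L, y` of the incidence graph. -/
def walkVia {x y : Γ.Point} (L : Γ.Line) (hx : x ∈ Γ.pts L) (hy : y ∈ Γ.pts L) :
    Γ.incGraph.Walk (Sum.inl x) (Sum.inl y) :=
  .cons (incGraph_adj_point_line.2 hx) (.cons (incGraph_adj_line_point.2 hy) .nil)

/-- The walk `x, L` of the incidence graph. -/
def walkTo {x : Γ.Point} (L : Γ.Line) (hx : x ∈ Γ.pts L) :
    Γ.incGraph.Walk (Sum.inl x) (Sum.inr L) :=
  .cons (incGraph_adj_point_line.2 hx) .nil

theorem line_unique_of_egirth (hg : 4 < Γ.incGraph.egirth) {x y : Γ.Point} {L M : Γ.Line}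
    (hxy : x ≠ y) (hxL : x ∈ Γ.pts L) (hyL : y ∈ Γ.pts L) (hxM : x ∈ Γ.pts M)
    (hyM : y ∈ Γ.pts M) : L = M := by
  have := eq_of_isPath_of_length_add_lt_egirth (p := walkVia L hxL hyL) (q := walkVia M hxM hyM)
    (by simpa [walkVia] using hxy) (by simpa [walkVia] using hxy) (by simpa [walkVia] using hg)
  simpa [walkVia] using congrArg SimpleGraph.Walk.support this

theorem no_triangle_of_egirth (hg : 6 < Γ.incGraph.egirth) {x a b : Γ.Point} {L : Γ.Line}
    (hab : a ≠ b) (ha : a ∈ Γ.pts L) (hb : b ∈ Γ.pts L) (hxa : Γ.Collinear x a)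
    (hxb : Γ.Collinear x b) : x ∈ Γ.pts L := by
  by_contra hx
  have path {c : Γ.Point} {M : Γ.Line} (hc : c ∈ Γ.pts L) (hne : x ≠ c) (hxM : x ∈ Γ.pts M)
      (hcM : c ∈ Γ.pts M) : ((walkVia M hxM hcM).append (walkTo L hc)).IsPath := by
    have : M ≠ L := fun h => hx (h ▸ hxM)
    simpa [walkVia, walkTo] using ⟨this, hne⟩
  obtain ⟨hne, M, hxM, haM⟩ := hxa
  obtain ⟨hne', N, hxN, hbN⟩ := hxb
  have := eq_of_isPath_of_length_add_lt_egirth (path ha hne hxM haM) (path hb hne' hxN hbN)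
    (by simpa [walkVia, walkTo] using hg)
  have hend : M = N ∧ a = b := by
    simpa [walkVia, walkTo] using congrArg SimpleGraph.Walk.support this
  exact hab hend.2

theorem no_quadrangle_of_egirth (hg : 8 < Γ.incGraph.egirth) {x y z w : Γ.Point} (hxy : x ≠ y)
    (hnc : ¬ Γ.Collinear x y) (hxz : Γ.Collinear x z) (hyz : Γ.Collinear y z)
    (hxw : Γ.Collinear x w) (hyw : Γ.Collinear y w) : z = w := by
  have path {c : Γ.Point} {M N : Γ.Line} (hxc : x ≠ c) (hyc : y ≠ c) (hxM : x ∈ Γ.pts M)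
      (hcM : c ∈ Γ.pts M) (hcN : c ∈ Γ.pts N) (hyN : y ∈ Γ.pts N) :
      ((walkVia M hxM hcM).append (walkVia N hcN hyN)).IsPath := by
    have : M ≠ N := by rintro rfl; exact hnc ⟨hxy, M, hxM, hyN⟩
    simp only [walkVia, SimpleGraph.Walk.cons_append, SimpleGraph.Walk.nil_append,
      SimpleGraph.Walk.cons_isPath_iff, SimpleGraph.Walk.isPath_iff_nil, SimpleGraph.Walk.nil_nil,
      SimpleGraph.Walk.support_nil, SimpleGraph.Walk.support_cons]
    grind
  obtain ⟨hxz, M, hxM, hzM⟩ := hxz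
  obtain ⟨hyz, N, hyN, hzN⟩ := hyz
  obtain ⟨hxw, M', hxM', hwM'⟩ := hxw
  obtain ⟨hyw, N', hyN', hwN'⟩ := hyw
  have := eq_of_isPath_of_length_add_lt_egirth (path hxz hyz hxM hzM hzN hyN)
    (path hxw hyw hxM' hwM' hwN' hyN') (by simpa [walkVia] using hg)
  have hmid : M = M' ∧ z = w ∧ N = N' := by
    simpa [walkVia] using congrArg SimpleGraph.Walk.support this
  exact hmid.2.1

theorem no_pentagon_of_egirth (hg : 10 < Γ.incGraph.egirth) {x a b : Γ.Point} {L : Γ.Line}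
    (hab : a ≠ b) (ha : a ∈ Γ.pts L) (hb : b ∈ Γ.pts L) (hxa : Γ.Special x a)
    (hxb : Γ.Special x b) : ∃ c ∈ Γ.pts L, Γ.Collinear x c := by
  by_contra! hno
  have path {c c' : Γ.Point} {M N : Γ.Line} (hc : c ∈ Γ.pts L) (hxc : Γ.Special x c)
      (hxc' : Γ.Collinear x c') (hcc' : c ≠ c') (hxM : x ∈ Γ.pts M) (hcM : c' ∈ Γ.pts M)
      (hcN' : c' ∈ Γ.pts N) (hcN : c ∈ Γ.pts N) :
      (((walkVia M hxM hcM).append (walkVia N hcN' hcN)).append (walkTo L hc)).IsPath := by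
    have hMN : M ≠ N := by rintro rfl; exact hxc.2.1 ⟨hxc.1, M, hxM, hcN⟩
    have hML : M ≠ L := by rintro rfl; exact hno c' hcM hxc'
    have hNL : N ≠ L := by rintro rfl; exact hno c' hcN' hxc'
    have := hxc.1
    have := hxc'.1
    simp only [walkVia, walkTo, SimpleGraph.Walk.cons_append, SimpleGraph.Walk.nil_append,
      SimpleGraph.Walk.cons_isPath_iff, SimpleGraph.Walk.isPath_iff_nil, SimpleGraph.Walk.nil_nil,
      SimpleGraph.Walk.support_nil, SimpleGraph.Walk.support_cons]
    grind
  obtain ⟨-, -, a', hxa', haa', N, haN, haN'⟩ := id hxa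
  obtain ⟨-, -, b', hxb', hbb', N', hbN, hbN'⟩ := id hxb
  obtain ⟨-, M, hxM, haM⟩ := id hxa'
  obtain ⟨-, M', hxM', hbM'⟩ := id hxb'
  have := eq_of_isPath_of_length_add_lt_egirth (path ha hxa hxa' haa' hxM haM haN' haN)
    (path hb hxb hxb' hbb' hxM' hbM' hbN' hbN) (by simpa [walkVia, walkTo] using hg)
  have hend : M = M' ∧ a' = b' ∧ N = N' ∧ a = b := by
    simpa [walkVia, walkTo] using congrArg SimpleGraph.Walk.support this
  exact hab hend.2.2.2

theorem walk_point_line_cases {x : Γ.Point} {L : Γ.Line}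
    (w : Γ.incGraph.Walk (Sum.inl x) (Sum.inr L)) :
    x ∈ Γ.pts L ∨ ∃ y M, x ∈ Γ.pts M ∧ y ∈ Γ.pts M ∧
      ∃ w' : Γ.incGraph.Walk (Sum.inl y) (Sum.inr L), w'.length + 2 = w.length := by
  rcases w with _ | @⟨_, y | M, _, h, w⟩
  · exact h.elim
  rcases w with _ | @⟨_, y | N, _, h', w⟩
  · exact .inl h
  · exact .inr ⟨y, M, h, h', w, rfl⟩
  · exact h'.elim

theorem not_opposite_of_mem_of_mem {x y z : Γ.Point} {L M : Γ.Line} (hx : x ∈ Γ.pts L)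
    (hy : y ∈ Γ.pts L) (hy' : y ∈ Γ.pts M) (hz : z ∈ Γ.pts M) : ¬ Γ.Opposite x z := by
  rintro ⟨hne, hnc, hns⟩
  have hxy : x ≠ y := by rintro rfl; exact hnc ⟨hne, M, hy', hz⟩
  have hzy : z ≠ y := by rintro rfl; exact hnc ⟨hne, L, hx, hy⟩
  exact hns ⟨hne, hnc, y, ⟨hxy, L, hx, hy⟩, ⟨hzy, M, hz, hy'⟩⟩

theorem exists_not_opposite_of_ediam (hd : Γ.incGraph.ediam ≤ 6) (x : Γ.Point) (L : Γ.Line) :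
    ∃ y ∈ Γ.pts L, ¬ Γ.Opposite x y := by
  have hle : Γ.incGraph.edist (Sum.inl x) (Sum.inr L) ≤ 6 := SimpleGraph.edist_le_ediam.trans hd
  have hreach : Γ.incGraph.Reachable (Sum.inl x) (Sum.inr L) :=
    SimpleGraph.reachable_of_edist_ne_top (ne_top_of_le_ne_top (by decide) hle)
  obtain ⟨w, hw⟩ := hreach.exists_walk_length_eq_edist
  have hlen : w.length ≤ 6 := by exact_mod_cast hw ▸ hle
  rcases walk_point_line_cases w with hx | ⟨y, M, hxM, hyM, w₁, h₁⟩
  · exact ⟨x, hx, not_opposite_of_mem_of_mem hx hx hx hx⟩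
  rcases walk_point_line_cases w₁ with hy | ⟨z, N, hyN, hzN, w₂, h₂⟩
  · exact ⟨y, hy, not_opposite_of_mem_of_mem hxM hyM hyM hyM⟩
  rcases walk_point_line_cases w₂ with hz | ⟨_, _, _, _, w₃, h₃⟩
  · exact ⟨z, hz, not_opposite_of_mem_of_mem hxM hyM hyN hzN⟩
  · have : 0 < w₃.length := w₃.not_nil_of_ne (by simp) |> SimpleGraph.Walk.not_nil_iff_lt_length.1
    omega

theorem IsGenHexagon.isHex (hΓ : Γ.IsGenHexagon) : Γ.IsHex where
  line_unique := line_unique_of_egirth (hΓ.2 ▸ by decide)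
  no_triangle := no_triangle_of_egirth (hΓ.2 ▸ by decide)
  no_quadrangle := no_quadrangle_of_egirth (hΓ.2 ▸ by decide)
  no_pentagon := no_pentagon_of_egirth (hΓ.2 ▸ by decide)
  exists_not_opposite := exists_not_opposite_of_ediam hΓ.1.le

end IncidenceGraph

/-- A point is near a line if it lies on it or is collinear to one of its points; in a generalised
hexagon, being far from a line means being opposite all but one of its points. -/
def Near (Γ : GenHexagon) (x : Γ.Point) (L : Γ.Line) : Prop :=
  x ∈ Γ.pts L ∨ ∃ a ∈ Γ.pts L, Γ.Collinear x a

theorem Special.symm {x y : Γ.Point} (h : Γ.Special x y) : Γ.Special y x :=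
  ⟨h.1.symm, fun hc => h.2.1 hc.symm, h.2.2.imp fun _ h => h.symm⟩

theorem Opposite.symm {x y : Γ.Point} (h : Γ.Opposite x y) : Γ.Opposite y x :=
  ⟨h.1.symm, fun hc => h.2.1 hc.symm, fun hc => h.2.2 hc.symm⟩

theorem not_opposite_iff {x y : Γ.Point} :
    ¬ Γ.Opposite x y ↔ x = y ∨ Γ.Collinear x y ∨ Γ.Special x y := by
  unfold Opposite
  tauto

theorem not_opposite_self (x : Γ.Point) : ¬ Γ.Opposite x x :=
  fun ho => ho.1 rfl

theorem Collinear.not_opposite {x y : Γ.Point} (h : Γ.Collinear x y) : ¬ Γ.Opposite x y :=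
  fun ho => ho.2.1 h

theorem Special.not_opposite {x y : Γ.Point} (h : Γ.Special x y) : ¬ Γ.Opposite x y :=
  fun ho => ho.2.2 h

theorem Special.notMem {x y : Γ.Point} {L : Γ.Line} (h : Γ.Special x y) (hy : y ∈ Γ.pts L) :
    x ∉ Γ.pts L :=
  fun hx => h.2.1 ⟨h.1, L, hx, hy⟩

theorem Near.not_opposite {x y : Γ.Point} {L : Γ.Line} (hx : Γ.Near x L) (hy : y ∈ Γ.pts L) :
    ¬ Γ.Opposite x y := by
  obtain hx | ⟨a, ha, -, M, hxM, haM⟩ := hx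
  · exact not_opposite_of_mem_of_mem hx hx hx hy
  · exact not_opposite_of_mem_of_mem hxM haM ha hy

theorem Opposite.not_near {x y : Γ.Point} {L : Γ.Line} (h : Γ.Opposite x y) (hy : y ∈ Γ.pts L) :
    ¬ Γ.Near x L :=
  fun hx => hx.not_opposite hy h

theorem special_of_not_near_of_not_opposite {x y : Γ.Point} {L : Γ.Line} (hx : ¬ Γ.Near x L)
    (hy : y ∈ Γ.pts L) (hxy : ¬ Γ.Opposite x y) : Γ.Special x y := by
  rcases not_opposite_iff.1 hxy with rfl | hc | hsp
  · exact absurd (Or.inl hy) hx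
  · exact absurd (Or.inr ⟨y, hy, hc⟩) hx
  · exact hsp

namespace IsHex

theorem special_of_collinear (h : Γ.IsHex) {x a b : Γ.Point} {L : Γ.Line} (hx : x ∉ Γ.pts L)
    (ha : a ∈ Γ.pts L) (hb : b ∈ Γ.pts L) (hab : b ≠ a) (hxa : Γ.Collinear x a) :
    Γ.Special x b :=
  ⟨fun e => hx (e ▸ hb), fun hc => hx (h.no_triangle hab hb ha hc hxa), a, hxa,
    hab, L, hb, ha⟩

theorem special_of_concurrent (h : Γ.IsHex) {x y p : Γ.Point} {L M : Γ.Line} (hLM : L ≠ M)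
    (hpL : p ∈ Γ.pts L) (hpM : p ∈ Γ.pts M) (hx : x ∈ Γ.pts L) (hy : y ∈ Γ.pts M)
    (hxp : x ≠ p) (hyp : y ≠ p) : Γ.Special x y :=
  h.special_of_collinear (fun hxM => hLM (h.line_unique hxp hx hpL hxM hpM)) hpM hy hyp
    ⟨hxp, L, hx, hpL⟩

theorem eq_of_special_of_not_near (h : Γ.IsHex) {x a b : Γ.Point} {L : Γ.Line}
    (hx : ¬ Γ.Near x L) (ha : a ∈ Γ.pts L) (hb : b ∈ Γ.pts L) (hxa : Γ.Special x a)
    (hxb : Γ.Special x b) : a = b := by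
  by_contra hab
  exact hx (Or.inr (h.no_pentagon hab ha hb hxa hxb))

theorem exists_special_of_not_near (h : Γ.IsHex) {x : Γ.Point} {L : Γ.Line}
    (hx : ¬ Γ.Near x L) : ∃ y ∈ Γ.pts L, Γ.Special x y := by
  obtain ⟨y, hy, hxy⟩ := h.exists_not_opposite x L
  exact ⟨y, hy, special_of_not_near_of_not_opposite hx hy hxy⟩

theorem opposite_of_not_near (h : Γ.IsHex) {x y z : Γ.Point} {L : Γ.Line} (hx : ¬ Γ.Near x L)
    (hy : y ∈ Γ.pts L) (hz : z ∈ Γ.pts L) (hxy : Γ.Special x y) (hyz : z ≠ y) :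
    Γ.Opposite x z := by
  by_contra hxz
  exact hyz (h.eq_of_special_of_not_near hx hz hy
    (special_of_not_near_of_not_opposite hx hz hxz) hxy)

theorem opposite_of_path (h : Γ.IsHex) {a b c d : Γ.Point} (hac : Γ.Special a c)
    (hbd : Γ.Special b d) (hab : Γ.Collinear a b) (hbc : Γ.Collinear b c)
    (hcd : Γ.Collinear c d) : Γ.Opposite a d := by
  have hnc : ¬ Γ.Collinear a d := fun had =>
    hbd.1 (h.no_quadrangle hac.1 hac.2.1 hab hbc.symm had hcd)
  refine ⟨fun had => hac.2.1 (had ▸ hcd.symm), hnc, fun hsp => ?_⟩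
  obtain ⟨hne, L, hcL, hdL⟩ := hcd
  obtain ⟨f, hf, haf⟩ := h.no_pentagon hne hcL hdL hac hsp
  have hcf : c ≠ f := fun e => hac.2.1 (e ▸ haf)
  have hbf : b = f := h.no_quadrangle hac.1 hac.2.1 hab hbc.symm haf ⟨hcf, L, hcL, hf⟩
  exact hbd.2.1 ⟨hbd.1, L, hbf ▸ hf, hdL⟩

theorem eq_of_near_of_collinear (h : Γ.IsHex) {w y c : Γ.Point} {M K : Γ.Line}
    (hw : w ∉ Γ.pts M) (hyM : y ∈ Γ.pts M) (hyK : y ∈ Γ.pts K) (hK : K ≠ M)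
    (hwK : Γ.Near w K) (hcM : c ∈ Γ.pts M) (hwc : Γ.Collinear w c) : y = c := by
  by_contra hyc
  have hsp : Γ.Special w y := h.special_of_collinear hw hcM hyM hyc hwc
  obtain ⟨a, ha, hwa⟩ := hwK.resolve_left (hsp.notMem hyK)
  have hya : y ≠ a := fun e => hsp.2.1 (e ▸ hwa)
  have hca : c = a := h.no_quadrangle hsp.1 hsp.2.1 hwc ⟨hyc, M, hyM, hcM⟩ hwa ⟨hya, K, hyK, ha⟩
  exact hK (h.line_unique hyc hyK (hca ▸ ha) hyM hcM)

theorem collinear_of_near_of_near (h : Γ.IsHex) {v y : Γ.Point} {K K' : Γ.Line} (hvy : v ≠ y)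
    (hK : K ≠ K') (hyK : y ∈ Γ.pts K) (hyK' : y ∈ Γ.pts K') (hvK : Γ.Near v K)
    (hvK' : Γ.Near v K') : Γ.Collinear v y := by
  obtain hv | ⟨a, ha, hva⟩ := hvK
  · exact ⟨hvy, K, hv, hyK⟩
  obtain hv | ⟨b, hb, hvb⟩ := hvK'
  · exact ⟨hvy, K', hv, hyK'⟩
  by_contra hnc
  have hay : a ≠ y := fun e => hnc (e ▸ hva)
  have hby : b ≠ y := fun e => hnc (e ▸ hvb)
  have hab : Γ.Special a b := h.special_of_concurrent hK hyK hyK' ha hb hay hby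
  exact hvy (h.no_quadrangle hab.1 hab.2.1 hva.symm hvb.symm ⟨hay, K, ha, hyK⟩
    ⟨hby, K', hb, hyK'⟩)

end IsHex

theorem HasOrder.finite_pts {s t : ℕ} (h : Γ.HasOrder s t) (L : Γ.Line) : (Γ.pts L).Finite :=
  Set.finite_of_encard_eq_coe (k := s + 1) (by exact_mod_cast h.1 L)

theorem HasOrder.finite_lines {s t : ℕ} (h : Γ.HasOrder s t) (x : Γ.Point) :
    {L | x ∈ Γ.pts L}.Finite :=
  Set.finite_of_encard_eq_coe (k := t + 1) (by exact_mod_cast h.2 x)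

theorem HasOrder.exists_line {s t : ℕ} (h : Γ.HasOrder s t) (x : Γ.Point) :
    ∃ L, x ∈ Γ.pts L := by
  have hpos : 0 < {L | x ∈ Γ.pts L}.encard := by
    rw [h.2]
    exact_mod_cast Nat.succ_pos t
  exact Set.encard_pos.1 hpos

/-- A set `S` of `s + 1` points of a hexagon of order `(s, t)`, with `s, t > 1`, such that no
point is opposite every member of `S`. -/
structure IsBlocking (Γ : GenHexagon) (s t : ℕ) (S : Set Γ.Point) : Prop where
  hex : Γ.IsHex
  order : Γ.HasOrder s t
  one_lt_s : 1 < s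
  one_lt_t : 1 < t
  encard_eq : S.encard = s + 1
  block : ∀ y, ∃ x ∈ S, ¬ Γ.Opposite y x

/-- `x` is near some line other than `L` through the point `y` of `L`. -/
def NearVia (Γ : GenHexagon) (L : Γ.Line) (y x : Γ.Point) : Prop :=
  ∃ K, y ∈ Γ.pts K ∧ K ≠ L ∧ Γ.Near x K

theorem Collinear.nearVia {x y : Γ.Point} {L : Γ.Line} (hxy : Γ.Collinear x y)
    (hx : x ∉ Γ.pts L) : Γ.NearVia L y x := by
  obtain ⟨-, K, hxK, hyK⟩ := hxy
  exact ⟨K, hyK, fun h => hx (h ▸ hxK), .inl hxK⟩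

theorem IsHex.eq_of_nearVia (h : Γ.IsHex) {w y y' : Γ.Point} {M : Γ.Line} (hw : w ∉ Γ.pts M)
    (hy : y ∈ Γ.pts M) (hy' : y' ∈ Γ.pts M) (hyw : Γ.NearVia M y w) (hyw' : Γ.NearVia M y' w) :
    y = y' := by
  obtain ⟨K, hyK, hK, hwK⟩ := hyw
  obtain ⟨K', hyK', hK', hwK'⟩ := hyw'
  by_cases hnear : Γ.Near w M
  · obtain ⟨c, hc, hwc⟩ := hnear.resolve_left hw
    exact (h.eq_of_near_of_collinear hw hy hyK hK hwK hc hwc).trans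
      (h.eq_of_near_of_collinear hw hy' hyK' hK' hwK' hc hwc).symm
  · exact h.eq_of_special_of_not_near hnear hy hy'
      (special_of_not_near_of_not_opposite hnear hy (hwK.not_opposite hyK))
      (special_of_not_near_of_not_opposite hnear hy' (hwK'.not_opposite hyK'))

namespace IsBlocking

variable {s t : ℕ} {S : Set Γ.Point}

theorem finite (h : Γ.IsBlocking s t S) : S.Finite :=
  Set.finite_of_encard_eq_coe (k := s + 1) (by exact_mod_cast h.encard_eq)

theorem nontrivial (h : Γ.IsBlocking s t S) : S.Nontrivial := by
  have := h.one_lt_s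
  rw [← Set.one_lt_encard_iff_nontrivial, h.encard_eq]
  exact_mod_cast (by omega : 1 < s + 1)

theorem encard_eq_encard_pts (h : Γ.IsBlocking s t S) (L : Γ.Line) :
    S.encard = (Γ.pts L).encard :=
  h.encard_eq.trans (h.order.1 L).symm

theorem exists_line_ne_ne (h : Γ.IsBlocking s t S) (x : Γ.Point) (L M : Γ.Line) :
    ∃ K, x ∈ Γ.pts K ∧ K ≠ L ∧ K ≠ M := by
  have := h.one_lt_t
  refine exists_mem_ne_ne_of_two_lt_encard (A := {K | x ∈ Γ.pts K}) ?_ L M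
  rw [h.order.2]
  exact_mod_cast (by omega : 2 < t + 1)

theorem exists_line_ne (h : Γ.IsBlocking s t S) (x : Γ.Point) (L : Γ.Line) :
    ∃ K, x ∈ Γ.pts K ∧ K ≠ L :=
  (h.exists_line_ne_ne x L L).imp fun _ h => ⟨h.1, h.2.1⟩

theorem exists_point_ne_ne (h : Γ.IsBlocking s t S) (L : Γ.Line) (x y : Γ.Point) :
    ∃ z ∈ Γ.pts L, z ≠ x ∧ z ≠ y := by
  have := h.one_lt_s
  refine exists_mem_ne_ne_of_two_lt_encard ?_ x y
  rw [h.order.1]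
  exact_mod_cast (by omega : 2 < s + 1)

theorem exists_point_ne (h : Γ.IsBlocking s t S) (L : Γ.Line) (x : Γ.Point) :
    ∃ z ∈ Γ.pts L, z ≠ x :=
  (h.exists_point_ne_ne L x x).imp fun _ h => ⟨h.1, h.2.1⟩

theorem exists_near (h : Γ.IsBlocking s t S) {x₁ x₂ y : Γ.Point} {K : Γ.Line} (h₁ : x₁ ∈ S)
    (h₂ : x₂ ∈ S) (hne : x₁ ≠ x₂) (hy₁ : ¬ Γ.Opposite x₁ y) (hy₂ : ¬ Γ.Opposite x₂ y)
    (hyK : y ∈ Γ.pts K) : ∃ x ∈ S, Γ.Near x K := by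
  by_contra! hfar
  refine hne (eq_of_rel_of_encard_le (r := fun z x => Γ.Special x z) (A := Γ.pts K)
    (fun z hz => ?_) (fun z hz z' hz' x hx => h.hex.eq_of_special_of_not_near (hfar x hx) hz hz')
    h.finite (h.encard_eq_encard_pts K).le hyK h₁ h₂
    (special_of_not_near_of_not_opposite (hfar _ h₁) hyK hy₁)
    (special_of_not_near_of_not_opposite (hfar _ h₂) hyK hy₂))
  obtain ⟨x, hx, hzx⟩ := h.block z
  exact ⟨x, hx, special_of_not_near_of_not_opposite (hfar x hx) hz fun ho => hzx ho.symm⟩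

theorem le_encard_special (h : Γ.IsBlocking s t S) {x₁ x₂ y : Γ.Point} (h₁ : x₁ ∈ S)
    (h₂ : x₂ ∈ S) (hne : x₁ ≠ x₂) (hy₁ : ¬ Γ.Opposite x₁ y) (hy₂ : ¬ Γ.Opposite x₂ y)
    (hyS : y ∉ S) (hyc : ∀ x ∈ S, ¬ Γ.Collinear x y) :
    (t + 1 : ℕ∞) ≤ {x ∈ S | Γ.Special y x}.encard := by
  rw [← h.order.2 y]
  refine encard_le_encard_of_rel (r := fun K x => Γ.Near x K) (fun K hK => ?_)
    fun K hK K' hK' x hx hxK hxK' => ?_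
  · obtain ⟨x, hx, hxK⟩ := h.exists_near h₁ h₂ hne hy₁ hy₂ hK
    rcases not_opposite_iff.1 (hxK.not_opposite hK) with rfl | hc | hsp
    · exact absurd hx hyS
    · exact absurd hc (hyc x hx)
    · exact ⟨x, ⟨hx, hsp.symm⟩, hxK⟩
  · by_contra hne
    exact hyc x hx.1 (h.hex.collinear_of_near_of_near hx.2.1.symm hne hK hK' hxK hxK')

theorem exists_nearVia (h : Γ.IsBlocking s t S) {L : Γ.Line} {x w y : Γ.Point} (hx : x ∈ S)
    (hw : w ∈ S) (hxw : x ≠ w) (hxL : Γ.Near x L) (hwL : Γ.Near w L) (hy : y ∈ Γ.pts L) :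
    ∃ z ∈ S, Γ.NearVia L y z := by
  obtain ⟨K, hyK, hK⟩ := h.exists_line_ne y L
  obtain ⟨z, hz, hzK⟩ := h.exists_near hx hw hxw (hxL.not_opposite hy) (hwL.not_opposite hy) hyK
  exact ⟨z, hz, K, hyK, hK, hzK⟩

theorem exists_mem_of_collinear_of_collinear (h : Γ.IsBlocking s t S) {L : Γ.Line}
    {x w a : Γ.Point} (hx : x ∈ S) (hw : w ∈ S) (hxw : x ≠ w) (ha : a ∈ Γ.pts L)
    (hxa : Γ.Collinear x a) (hwa : Γ.Collinear w a) : ∃ z ∈ S, z ∈ Γ.pts L := by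
  by_contra! hL
  exact hxw (eq_of_rel_of_encard_le (r := Γ.NearVia L)
    (fun y => h.exists_nearVia hx hw hxw (.inr ⟨a, ha, hxa⟩) (.inr ⟨a, ha, hwa⟩))
    (fun y hy y' hy' z hz => h.hex.eq_of_nearVia (hL z hz) hy hy') h.finite
    (h.encard_eq_encard_pts L).le ha hx hw (hxa.nearVia (hL x hx)) (hwa.nearVia (hL w hw)))

theorem exists_collinear_of_near_of_near (h : Γ.IsBlocking s t S) {L : Γ.Line}
    {x w v : Γ.Point} (hL : ∀ z ∈ S, z ∉ Γ.pts L) (hx : x ∈ S) (hw : w ∈ S) (hxw : x ≠ w)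
    (hxL : Γ.Near x L) (hwL : Γ.Near w L) (hv : v ∈ S) : ∃ c ∈ Γ.pts L, Γ.Collinear v c := by
  have total : ∀ y ∈ Γ.pts L, ∃ z ∈ S, Γ.NearVia L y z :=
    fun y => h.exists_nearVia hx hw hxw hxL hwL
  have inj : ∀ y ∈ Γ.pts L, ∀ y' ∈ Γ.pts L, ∀ z ∈ S, Γ.NearVia L y z → Γ.NearVia L y' z →
      y = y' := fun y hy y' hy' z hz => h.hex.eq_of_nearVia (hL z hz) hy hy'
  have hcard := (h.encard_eq_encard_pts L).le
  obtain ⟨y, hy, K, hyK, hKL, hvK⟩ := exists_rel_of_encard_le total inj h.finite hcard hv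
  obtain ⟨K', hyK', hK'L, hK'K⟩ := h.exists_line_ne_ne y L K
  obtain ⟨z, hz, hzK'⟩ :=
    h.exists_near hx hw hxw (hxL.not_opposite hy) (hwL.not_opposite hy) hyK'
  obtain rfl : v = z := eq_of_rel_of_encard_le total inj h.finite hcard hy hv hz
    ⟨K, hyK, hKL, hvK⟩ ⟨K', hyK', hK'L, hzK'⟩
  exact ⟨y, hy, h.hex.collinear_of_near_of_near (ne_of_mem_of_not_mem hy (hL v hv)).symm
    hK'K.symm hyK hyK' hvK hzK'⟩

theorem eq_pts_of_collinear (h : Γ.IsBlocking s t S) {L : Γ.Line} {x₁ x₂ : Γ.Point}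
    (h₁ : x₁ ∈ S) (h₂ : x₂ ∈ S) (hne : x₁ ≠ x₂) (hL₁ : x₁ ∈ Γ.pts L) (hL₂ : x₂ ∈ Γ.pts L) :
    S = Γ.pts L := by
  by_contra hSL
  obtain ⟨z₀, hz₀, hz₀S⟩ := Set.not_subset.1 fun hsub : Γ.pts L ⊆ S =>
    hSL ((h.order.finite_pts L).eq_of_subset_of_encard_le hsub (h.encard_eq_encard_pts L).le).symm
  have hmeet {z : Γ.Point} {M : Γ.Line} (hz : z ∈ Γ.pts L \ S) (hzM : z ∈ Γ.pts M)
      (hML : M ≠ L) : ∃ u ∈ S \ Γ.pts L, u ∈ Γ.pts M := by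
    obtain ⟨u, hu, huM⟩ := h.exists_mem_of_collinear_of_collinear h₁ h₂ hne hzM
      ⟨fun e => hz.2 (e ▸ h₁), L, hL₁, hz.1⟩ ⟨fun e => hz.2 (e ▸ h₂), L, hL₂, hz.1⟩
    exact ⟨u, ⟨hu, fun huL => hML
      (h.hex.line_unique (ne_of_mem_of_not_mem hu hz.2) huM hzM huL hz.1)⟩, huM⟩
  have total : ∀ z ∈ Γ.pts L \ S, ∃ u ∈ S \ Γ.pts L, Γ.Collinear u z := fun z hz => by
    obtain ⟨M, hzM, hML⟩ := h.exists_line_ne z L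
    obtain ⟨u, hu, huM⟩ := hmeet hz hzM hML
    exact ⟨u, hu, ne_of_mem_of_not_mem hu.1 hz.2, M, huM, hzM⟩
  have inj : ∀ z ∈ Γ.pts L \ S, ∀ z' ∈ Γ.pts L \ S, ∀ u ∈ S \ Γ.pts L, Γ.Collinear u z →
      Γ.Collinear u z' → z = z' := fun z hz z' hz' u hu huz huz' => by
    by_contra hzz
    exact hu.2 (h.hex.no_triangle hzz hz.1 hz'.1 huz huz')
  have hcard : (S \ Γ.pts L).encard = (Γ.pts L \ S).encard :=
    (Set.encard_eq_encard_iff_encard_sdiff_eq_encard_sdiff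
      (h.finite.subset Set.inter_subset_left)).1 (h.encard_eq_encard_pts L)
  obtain ⟨M, hzM, hML, -⟩ := h.exists_line_ne_ne z₀ L L
  obtain ⟨N, hzN, hNL, hNM⟩ := h.exists_line_ne_ne z₀ L M
  obtain ⟨u, hu, huM⟩ := hmeet ⟨hz₀, hz₀S⟩ hzM hML
  obtain ⟨v, hv, hvN⟩ := hmeet ⟨hz₀, hz₀S⟩ hzN hNL
  have hu₀ : u ≠ z₀ := ne_of_mem_of_not_mem hu.1 hz₀S
  obtain rfl : u = v := eq_of_rel_of_encard_le total inj (h.finite.subset Set.sdiff_subset)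
    hcard.le ⟨hz₀, hz₀S⟩ hu hv ⟨hu₀, M, huM, hzM⟩ ⟨ne_of_mem_of_not_mem hv.1 hz₀S, N, hvN, hzN⟩
  exact hNM (h.hex.line_unique hu₀ hvN hzN huM hzM)

end IsBlocking

theorem not_opposite_of_collinear_of_collinear {x y z : Γ.Point} (hxy : Γ.Collinear x y)
    (hyz : Γ.Collinear y z) : ¬ Γ.Opposite x z :=
  fun ho => ho.2.2 ⟨ho.1, ho.2.1, y, hxy, hyz.symm⟩

theorem OppLines.not_near {L M : Γ.Line} (hLM : Γ.OppLines L M) {x : Γ.Point}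
    (hx : x ∈ Γ.pts L) : ¬ Γ.Near x M := by
  rintro (hm | ⟨a, ha, hxa⟩)
  · exact hLM.1 x hx hm
  · exact hLM.2 x hx a ha hxa

namespace IsHex

theorem closeTo (h : Γ.IsHex) {x a : Γ.Point} {L : Γ.Line} (hx : x ∉ Γ.pts L)
    (ha : a ∈ Γ.pts L) (hxa : Γ.Collinear x a) : Γ.CloseTo x L := by
  refine ⟨a, ⟨ha, hxa⟩, fun b hb => ?_⟩
  by_contra hba
  exact hx (h.no_triangle hba hb.1 ha hb.2 hxa)

theorem oppLines_of_path (h : Γ.IsHex) {a₁ a₂ x : Γ.Point} {L₁ L₂ : Γ.Line}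
    (haa : Γ.Special a₁ a₂) (hcol₁ : Γ.Collinear a₁ x) (hcol₂ : Γ.Collinear a₂ x)
    (haL₁ : a₁ ∈ Γ.pts L₁) (haL₂ : a₂ ∈ Γ.pts L₂) (hx₁ : x ∉ Γ.pts L₁) (hx₂ : x ∉ Γ.pts L₂)
    (hex₁ : ∃ v ∈ Γ.pts L₁, v ≠ a₁) (hex₂ : ∃ v ∈ Γ.pts L₂, v ≠ a₂) : Γ.OppLines L₁ L₂ := by
  have hopp₁ : ∀ v ∈ Γ.pts L₂, v ≠ a₂ → Γ.Opposite a₁ v := fun v hv hva =>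
    h.opposite_of_path haa (h.special_of_collinear hx₂ haL₂ hv hva hcol₂.symm) hcol₁
      hcol₂.symm ⟨hva.symm, L₂, haL₂, hv⟩
  have hopp₂ : ∀ v ∈ Γ.pts L₁, v ≠ a₁ → Γ.Opposite a₂ v := fun v hv hva =>
    h.opposite_of_path haa.symm (h.special_of_collinear hx₁ haL₁ hv hva hcol₁.symm)
      hcol₂ hcol₁.symm ⟨hva.symm, L₁, haL₁, hv⟩
  have hfar₁ : ¬ Γ.Near a₁ L₂ := by
    obtain ⟨v, hv, hva⟩ := hex₂
    exact (hopp₁ v hv hva).not_near hv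
  have hfar₂ : ¬ Γ.Near a₂ L₁ := by
    obtain ⟨v, hv, hva⟩ := hex₁
    exact (hopp₂ v hv hva).not_near hv
  refine ⟨fun u hu hu' => ?_, fun u hu v hv huv => ?_⟩
  · have hua₁ : u ≠ a₁ := fun e => hfar₁ (Or.inl (e ▸ hu'))
    have hua₂ : u ≠ a₂ := fun e => hfar₂ (Or.inl (e ▸ hu))
    exact (hopp₁ u hu' hua₂).2.1 ⟨hua₁.symm, L₁, haL₁, hu⟩
  · have hua₁ : u ≠ a₁ := fun e => hfar₁ (Or.inr ⟨v, hv, e ▸ huv⟩)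
    have hva₂ : v ≠ a₂ := fun e => hfar₂ (Or.inr ⟨u, hu, e ▸ huv.symm⟩)
    exact not_opposite_of_collinear_of_collinear ⟨hua₁.symm, L₁, haL₁, hu⟩ huv
      (hopp₁ v hv hva₂)

theorem encard_trace3_le (h : Γ.IsHex) {L M : Γ.Line} (hLM : Γ.OppLines L M) :
    (Γ.trace3 L M).encard ≤ (Γ.pts L).encard := by
  refine encard_le_encard_of_rel (r := Γ.Collinear) (fun x hx => hx.1.exists)
    fun x hx x' hx' a ha hxa hxa' => ?_
  obtain ⟨b, hb, hxb⟩ := hx.2.exists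
  obtain ⟨b', hb', hxb'⟩ := hx'.2.exists
  have hfar := hLM.not_near ha
  have hsp := special_of_not_near_of_not_opposite hfar hb
    (not_opposite_of_collinear_of_collinear hxa.symm hxb)
  have hsp' := special_of_not_near_of_not_opposite hfar hb'
    (not_opposite_of_collinear_of_collinear hxa'.symm hxb')
  obtain rfl := h.eq_of_special_of_not_near hfar hb hb' hsp hsp'
  exact h.no_quadrangle hsp.1 hsp.2.1 hxa.symm hxb.symm hxa'.symm hxb'.symm

end IsHex

namespace IsBlocking

variable {s t : ℕ} {S : Set Γ.Point}

theorem eq_trace3_of_subset (h : Γ.IsBlocking s t S) {L M : Γ.Line} (hLM : Γ.OppLines L M)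
    (hsub : S ⊆ Γ.trace3 L M) : S = Γ.trace3 L M :=
  h.finite.eq_of_subset_of_encard_le hsub
    ((h.hex.encard_trace3_le hLM).trans (h.encard_eq_encard_pts L).ge)

theorem forall_closeTo (h : Γ.IsBlocking s t S) (hopp : S.Pairwise Γ.Opposite) {L : Γ.Line}
    {x w : Γ.Point} (hx : x ∈ S) (hw : w ∈ S) (hxw : x ≠ w) (hxL : Γ.Near x L)
    (hwL : Γ.Near w L) : ∀ v ∈ S, v ∉ Γ.pts L ∧ Γ.CloseTo v L := by
  have hL : ∀ z ∈ S, z ∉ Γ.pts L := fun z hz hzL => by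
    have eq_of_near {u : Γ.Point} (hu : u ∈ S) (huL : Γ.Near u L) : u = z :=
      by_contra fun hne => huL.not_opposite hzL (hopp hu hz hne)
    exact hxw ((eq_of_near hx hxL).trans (eq_of_near hw hwL).symm)
  intro v hv
  obtain ⟨c, hc, hvc⟩ := h.exists_collinear_of_near_of_near hL hx hw hxw hxL hwL hv
  exact ⟨hL v hv, h.hex.closeTo (hL v hv) hc hvc⟩

theorem exists_transversal (h : Γ.IsBlocking s t S) (hopp : S.Pairwise Γ.Opposite)
    {x₁ x₂ : Γ.Point} (h₁ : x₁ ∈ S) (h₂ : x₂ ∈ S) (hne : x₁ ≠ x₂) {A : Γ.Line}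
    (hA : x₁ ∈ Γ.pts A) : ∃ a ∈ Γ.pts A, a ≠ x₁ ∧ ∃ L, a ∈ Γ.pts L ∧
      ∀ v ∈ S, v ∉ Γ.pts L ∧ Γ.CloseTo v L := by
  have h₂₁ := hopp h₂ h₁ hne.symm
  obtain ⟨a, ha, hsp⟩ := h.hex.exists_special_of_not_near (h₂₁.not_near hA)
  have hax : a ≠ x₁ := fun e => h₂₁.2.2 (e ▸ hsp)
  obtain ⟨b, hxb, -, L, haL, hbL⟩ := hsp.2.2
  exact ⟨a, ha, hax, L, haL, h.forall_closeTo hopp h₁ h₂ hne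
    (.inr ⟨a, haL, hax.symm, A, hA, ha⟩) (.inr ⟨b, hbL, hxb⟩)⟩

theorem exists_eq_trace3 (h : Γ.IsBlocking s t S) (hopp : S.Pairwise Γ.Opposite) :
    ∃ L M, Γ.OppLines L M ∧ S = Γ.trace3 L M := by
  obtain ⟨x₁, h₁, x₂, h₂, hne⟩ := h.nontrivial
  obtain ⟨A₁, hA₁⟩ := h.order.exists_line x₁
  obtain ⟨A₂, hA₂, hA⟩ := h.exists_line_ne x₁ A₁
  obtain ⟨a₁, ha₁, hax₁, L₁, haL₁, hall₁⟩ := h.exists_transversal hopp h₁ h₂ hne hA₁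
  obtain ⟨a₂, ha₂, hax₂, L₂, haL₂, hall₂⟩ := h.exists_transversal hopp h₁ h₂ hne hA₂
  have hLL : Γ.OppLines L₁ L₂ :=
    h.hex.oppLines_of_path (h.hex.special_of_concurrent hA.symm hA₁ hA₂ ha₁ ha₂ hax₁ hax₂)
      ⟨hax₁, A₁, ha₁, hA₁⟩ ⟨hax₂, A₂, ha₂, hA₂⟩ haL₁ haL₂ (hall₁ x₁ h₁).1 (hall₂ x₁ h₁).1
      (h.exists_point_ne L₁ a₁) (h.exists_point_ne L₂ a₂)
  exact ⟨L₁, L₂, hLL, h.eq_trace3_of_subset hLL fun v hv => ⟨(hall₁ v hv).2, (hall₂ v hv).2⟩⟩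

theorem regularTrace3 (h : Γ.IsBlocking s t S) (hopp : S.Pairwise Γ.Opposite) {L M : Γ.Line}
    (hS : S = Γ.trace3 L M) : Γ.RegularTrace3 L M := by
  intro N hN hnt
  rw [← hS] at hnt ⊢
  obtain ⟨x, ⟨hxN, hx⟩, w, ⟨hwN, hw⟩, hxw⟩ := hnt
  have hall := h.forall_closeTo hopp hx hw hxw (.inr hxN.1.exists) (.inr hwN.1.exists)
  exact (h.eq_trace3_of_subset hN fun v hv => ⟨(hall v hv).2, (hS ▸ hv : v ∈ Γ.trace3 L M).2⟩).symm

theorem exists_opposite_of_pairwise_opposite (h : Γ.IsBlocking s t S)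
    (hopp : S.Pairwise Γ.Opposite) {x₁ : Γ.Point} (h₁ : x₁ ∈ S) {A : Γ.Line}
    (hA : x₁ ∈ Γ.pts A) : ∃ a ∈ Γ.pts A, a ≠ x₁ ∧ ∀ z ∈ S, z ≠ x₁ → Γ.Opposite z a := by
  obtain ⟨x₂, h₂, hne⟩ := h.nontrivial.exists_ne x₁
  obtain ⟨a₁, ha₁, hax₁, L, haL, hall⟩ := h.exists_transversal hopp h₁ h₂ hne.symm hA
  obtain ⟨a, ha, hax, haa₁⟩ := h.exists_point_ne_ne A x₁ a₁
  refine ⟨a, ha, hax, fun z hz hzx => ?_⟩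
  obtain ⟨hzL, c, ⟨hc, hzc⟩, -⟩ := hall z hz
  have hca : a₁ ≠ c := fun e =>
    not_opposite_of_collinear_of_collinear (e ▸ hzc) ⟨hax₁, A, ha₁, hA⟩ (hopp hz h₁ hzx)
  exact h.hex.opposite_of_not_near ((hopp hz h₁ hzx).not_near hA) ha₁ ha
    (h.hex.special_of_collinear hzL hc haL hca hzc) haa₁

theorem t_le_s_of_pairwise_opposite (h : Γ.IsBlocking s t S) (hopp : S.Pairwise Γ.Opposite) :
    t ≤ s := by
  obtain ⟨x₁, h₁, x₂, h₂, hne⟩ := h.nontrivial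
  obtain ⟨A, hA⟩ := h.order.exists_line x₁
  obtain ⟨a, ha, hax, hopp_a⟩ := h.exists_opposite_of_pairwise_opposite hopp h₁ hA
  obtain ⟨Y, haY, hYA⟩ := h.exists_line_ne a A
  have ho₂ := hopp_a x₂ h₂ hne.symm
  obtain ⟨y, hy, hspy⟩ := h.hex.exists_special_of_not_near (ho₂.not_near haY)
  have hya : y ≠ a := fun e => ho₂.2.2 (e ▸ hspy)
  have hspx : Γ.Special y x₁ := h.hex.special_of_concurrent hYA haY ha hy hA hya hax.symm
  have hyS : y ∉ S := fun hyS => hspx.not_opposite (hopp hyS h₁ hspx.1)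
  have hle : (t + 1 : ℕ∞) ≤ S.encard := by
    refine (h.le_encard_special h₁ h₂ hne hspx.symm.not_opposite hspy.not_opposite hyS
      fun z hz hzy => ?_).trans (Set.encard_le_encard (Set.sep_subset _ _))
    obtain rfl | hzx := eq_or_ne z x₁
    · exact hspx.2.1 hzy.symm
    · exact not_opposite_of_collinear_of_collinear hzy ⟨hya, Y, hy, haY⟩ (hopp_a z hz hzx)
  rw [h.encard_eq] at hle
  exact Nat.le_of_succ_le_succ (by exact_mod_cast hle)

theorem exists_mem_line_of_forall_collinear (h : Γ.IsBlocking s t S) {p : Γ.Point}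
    (hp : ∀ x ∈ S, Γ.Collinear x p) {D : Γ.Line} (hD : p ∈ Γ.pts D) :
    ∃ x ∈ S, x ∈ Γ.pts D := by
  obtain ⟨x₁, h₁, x₂, h₂, hne⟩ := h.nontrivial
  exact h.exists_mem_of_collinear_of_collinear h₁ h₂ hne hD (hp _ h₁) (hp _ h₂)

theorem s_eq_t_of_forall_collinear (h : Γ.IsBlocking s t S)
    (hnc : ∀ x ∈ S, ∀ y ∈ S, ¬ Γ.Collinear x y) {p : Γ.Point}
    (hp : ∀ x ∈ S, Γ.Collinear x p) : s = t := by
  have hle : {D | p ∈ Γ.pts D}.encard ≤ S.encard :=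
    encard_le_encard_of_rel (r := fun D x => x ∈ Γ.pts D)
      (fun D hD => h.exists_mem_line_of_forall_collinear hp hD)
      fun D hD D' hD' x hx hxD hxD' => h.hex.line_unique (hp x hx).1 hxD hD hxD' hD'
  have hge : S.encard ≤ {D | p ∈ Γ.pts D}.encard :=
    encard_le_encard_of_rel (r := fun x D => x ∈ Γ.pts D)
      (fun x hx => (hp x hx).2.imp fun D hD => ⟨hD.2, hD.1⟩)
      fun x hx x' hx' D _ hxD hxD' => by_contra fun hxx => hnc x hx x' hx' ⟨hxx, D, hxD, hxD'⟩
  have heq := hge.antisymm hle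
  rw [h.encard_eq, h.order.2] at heq
  exact Nat.succ_injective (by exact_mod_cast heq)

theorem isHyperbolicLine_of_forall_collinear (h : Γ.IsBlocking s t S)
    (hnc : ∀ x ∈ S, ∀ y ∈ S, ¬ Γ.Collinear x y) {p : Γ.Point}
    (hp : ∀ x ∈ S, Γ.Collinear x p) : Γ.IsHyperbolicLine S := by
  refine ⟨fun x hx y hy hxy => ⟨hxy, hnc x hx y hy, p, hp x hx, hp y hy⟩, p, hp, ?_⟩
  rintro q hqp ⟨y₁, ⟨hy₁, hq₁⟩, y₂, ⟨hy₂, hq₂⟩, hyne⟩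
  have hall : {x ∈ S | Γ.Special q x} = S := by
    refine h.finite.eq_of_subset_of_encard_le' (Set.sep_subset _ _) ?_
    rw [h.encard_eq, h.s_eq_t_of_forall_collinear hnc hp]
    exact h.le_encard_special hy₁ hy₂ hyne hq₁.symm.not_opposite hq₂.symm.not_opposite
      (fun hq => (hp q hq).not_opposite hqp)
      fun x hx hxq => not_opposite_of_collinear_of_collinear hxq.symm (hp x hx) hqp
  have hsp : ∀ x ∈ S, Γ.Special q x := fun x hx => (Set.sep_eq_self_iff_mem_true.1 hall) x hx
  ext x
  refine ⟨fun ⟨hqx, _, D, hxD, hpD⟩ => ?_, fun hx => ⟨hsp x hx, hp x hx⟩⟩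
  obtain ⟨x', hx', hxD'⟩ := h.exists_mem_line_of_forall_collinear hp hpD
  rwa [h.hex.eq_of_special_of_not_near (hqp.not_near hpD) hxD hxD' hqx (hsp x' hx')]

end IsBlocking

/-! ### Centres -/

/-- The centres of `S`: the points collinear to at least two members of `S`. -/
def centers (Γ : GenHexagon) (S : Set Γ.Point) : Set Γ.Point :=
  {r | ∃ x ∈ S, ∃ y ∈ S, x ≠ y ∧ Γ.Collinear x r ∧ Γ.Collinear y r}

theorem IsBlocking.exists_mem_of_mem_centers {s t : ℕ} {S : Set Γ.Point}
    (h : Γ.IsBlocking s t S) {r : Γ.Point} {D : Γ.Line} (hr : r ∈ Γ.centers S)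
    (hrD : r ∈ Γ.pts D) : ∃ x ∈ S, x ∈ Γ.pts D := by
  obtain ⟨x, hx, y, hy, hxy, hxr, hyr⟩ := hr
  exact h.exists_mem_of_collinear_of_collinear hx hy hxy hrD hxr hyr

/-- A blocking set no two members of which are collinear. -/
structure IsNoncollinearBlocking (Γ : GenHexagon) (s t : ℕ) (S : Set Γ.Point) : Prop
    extends Γ.IsBlocking s t S where
  not_collinear : ∀ x ∈ S, ∀ y ∈ S, ¬ Γ.Collinear x y

namespace IsNoncollinearBlocking

variable {s t : ℕ} {S : Set Γ.Point}

theorem notMem_of_mem_centers (h : Γ.IsNoncollinearBlocking s t S) {r : Γ.Point}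
    (hr : r ∈ Γ.centers S) : r ∉ S := by
  obtain ⟨x, hx, -, -, -, hxr, -⟩ := hr
  exact fun hrS => h.not_collinear x hx r hrS hxr

theorem eq_of_mem (h : Γ.IsNoncollinearBlocking s t S) {x y : Γ.Point} {L : Γ.Line} (hx : x ∈ S)
    (hy : y ∈ S) (hxL : x ∈ Γ.pts L) (hyL : y ∈ Γ.pts L) : x = y := by
  by_contra hxy
  exact h.not_collinear x hx y hy ⟨hxy, L, hxL, hyL⟩

theorem pairwise_opposite_of_centers_eq_empty (h : Γ.IsNoncollinearBlocking s t S)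
    (hc : Γ.centers S = ∅) : S.Pairwise Γ.Opposite := by
  refine fun x hx y hy hxy => ⟨hxy, h.not_collinear x hx y hy, ?_⟩
  rintro ⟨-, -, z, hxz, hyz⟩
  exact Set.notMem_empty z (hc ▸ ⟨x, hx, y, hy, hxy, hxz, hyz⟩)

theorem exists_mem_notMem (h : Γ.IsNoncollinearBlocking s t S) {r : Γ.Point} {D : Γ.Line}
    (hr : r ∈ Γ.centers S) (hrD : r ∈ Γ.pts D) :
    ∃ x ∈ S, x ∉ Γ.pts D ∧ Γ.Collinear x r := by
  obtain ⟨B, hrB, hBD⟩ := h.exists_line_ne r D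
  obtain ⟨x, hx, hxB⟩ := h.exists_mem_of_mem_centers hr hrB
  have hxr : x ≠ r := fun e => h.notMem_of_mem_centers hr (e ▸ hx)
  exact ⟨x, hx, fun hxD => hBD (h.hex.line_unique hxr hxB hrB hxD hrD), hxr, B, hxB, hrB⟩

theorem exists_mem_of_center_collinear (h : Γ.IsNoncollinearBlocking s t S) {L : Γ.Line}
    {x w c r : Γ.Point} (hx : x ∈ S) (hw : w ∈ S) (hxw : x ≠ w) (hxL : Γ.Near x L)
    (hwL : Γ.Near w L) (hc : c ∈ Γ.pts L) (hcr : Γ.Collinear c r) (hr : r ∈ Γ.centers S) :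
    ∃ z ∈ S, z ∈ Γ.pts L := by
  by_contra hL
  have hrL : r ∉ Γ.pts L := fun hrL => hL (h.exists_mem_of_mem_centers hr hrL)
  push Not at hL
  obtain ⟨hcr, D, hcD, hrD⟩ := hcr
  obtain ⟨v, hv, hvD, hvr⟩ := h.exists_mem_notMem hr hrD
  obtain ⟨d, hd, hvd⟩ := h.exists_collinear_of_near_of_near hL hx hw hxw hxL hwL hv
  have hvc : ¬ Γ.Collinear v c := fun hvc => hvD (h.hex.no_triangle hcr.symm hrD hcD hvr hvc)
  have hcd : c ≠ d := fun e => hvc (e ▸ hvd)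
  have hrd : r = d := h.hex.no_quadrangle (ne_of_mem_of_not_mem hcD hvD).symm hvc hvr
    ⟨hcr, D, hcD, hrD⟩ hvd ⟨hcd, L, hc, hd⟩
  exact hrL (hrd ▸ hd)

theorem mem_centers_of_path (h : Γ.IsNoncollinearBlocking s t S) {w p u z : Γ.Point}
    (hw : w ∈ S) (hp : p ∈ Γ.centers S) (hwp : Γ.Opposite w p) (hwu : Γ.Collinear w u)
    (huz : Γ.Collinear u z) (hzp : Γ.Collinear z p) : u ∈ Γ.centers S := by
  obtain ⟨-, D, hzD, hpD⟩ := id hzp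
  obtain ⟨x, hx, hxD⟩ := h.exists_mem_of_mem_centers hp hpD
  have hxp : x ≠ p := fun e => h.notMem_of_mem_centers hp (e ▸ hx)
  have hwx : w ≠ x := by
    rintro rfl
    exact hwp.2.1 ⟨hxp, D, hxD, hpD⟩
  by_cases hxz : x = z
  · exact ⟨w, hw, x, hx, hwx, hwu, hxz ▸ huz.symm⟩
  obtain ⟨-, L, huL, hzL⟩ := id huz
  obtain ⟨v, hv, hvL⟩ := h.exists_mem_of_center_collinear hx hw hwx.symm
    (.inr ⟨z, hzL, hxz, D, hxD, hzD⟩) (.inr ⟨u, huL, hwu⟩) hzL hzp hp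
  have hvu : v ≠ u := fun e => h.not_collinear w hw v hv (e ▸ hwu)
  refine ⟨w, hw, v, hv, ?_, hwu, hvu, L, hvL, huL⟩
  rintro rfl
  by_cases hwz : w = z
  · exact hwp.2.1 (hwz ▸ hzp)
  · exact not_opposite_of_collinear_of_collinear ⟨hwz, L, hvL, hzL⟩ hzp hwp

theorem exists_mem_centers_of_opposite (h : Γ.IsNoncollinearBlocking s t S) {w p : Γ.Point}
    {A : Γ.Line} (hw : w ∈ S) (hp : p ∈ Γ.centers S) (hwp : Γ.Opposite w p)
    (hwA : w ∈ Γ.pts A) : ∃ u ∈ Γ.pts A, u ∈ Γ.centers S := by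
  obtain ⟨u, hu, hpu⟩ := h.hex.exists_special_of_not_near (hwp.symm.not_near hwA)
  have hwu : w ≠ u := fun e => hwp.symm.2.2 (e ▸ hpu)
  obtain ⟨z, hpz, huz⟩ := hpu.2.2
  exact ⟨u, hu, h.mem_centers_of_path hw hp hwp ⟨hwu, A, hwA, hu⟩ huz hpz.symm⟩

theorem exists_mem_centers_of_collinear (h : Γ.IsNoncollinearBlocking s t S)
    {x w p : Γ.Point} {A : Γ.Line} (hx : x ∈ S) (hw : w ∈ S) (hxw : Γ.Opposite x w)
    (hp : p ∈ Γ.centers S) (hxp : Γ.Collinear x p) (hxA : x ∈ Γ.pts A) :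
    ∃ u ∈ Γ.pts A, u ∈ Γ.centers S := by
  by_cases hpA : p ∈ Γ.pts A
  · exact ⟨p, hpA, hp⟩
  have hfar := hxw.symm.not_near hxA
  obtain ⟨a, ha, hwa⟩ := h.hex.exists_special_of_not_near hfar
  have hxa : x ≠ a := fun e => hxw.symm.2.2 (e ▸ hwa)
  have hcxa : Γ.Collinear x a := ⟨hxa, A, hxA, ha⟩
  obtain ⟨b, hwb, -, L, haL, hbL⟩ := hwa.2.2
  have hmeet : ∃ v ∈ S, v ∈ Γ.pts L := by
    by_contra! hL
    obtain ⟨-, D, hxD, hpD⟩ := id hxp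
    obtain ⟨v, hv, hvD, hvp⟩ := h.exists_mem_notMem hp hpD
    have hvx : v ≠ x := fun e => hvD (e ▸ hxD)
    have hva : Γ.Opposite v a :=
      h.hex.opposite_of_path ⟨hvx, h.not_collinear v hv x hx, p, hvp, hxp⟩
        (h.hex.special_of_collinear hpA hxA ha hxa.symm hxp.symm) hvp hxp.symm hcxa
    obtain ⟨c, hc, hvc⟩ := h.exists_collinear_of_near_of_near hL hx hw hxw.1
      (.inr ⟨a, haL, hcxa⟩) (.inr ⟨b, hbL, hwb⟩) hv
    exact hva.not_near haL (.inr ⟨c, hc, hvc⟩)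
  obtain ⟨v, hv, hvL⟩ := hmeet
  have hva : v ≠ a := fun e => h.not_collinear x hx v hv (e ▸ hcxa)
  refine ⟨a, ha, x, hx, v, hv, ?_, hcxa, hva, L, hvL, haL⟩
  rintro rfl
  obtain rfl := h.hex.line_unique hxa hxA ha hvL haL
  exact hfar (.inr ⟨b, hbL, hwb⟩)

theorem exists_opposite_of_mem_centers (h : Γ.IsNoncollinearBlocking s t S) {w p : Γ.Point}
    (hw : w ∈ S) (hp : p ∈ Γ.centers S) (hwp : ¬ Γ.Collinear w p) :
    ∃ w' ∈ S, Γ.Opposite w' p := by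
  by_contra! hno
  have hsp : Γ.Special w p :=
    ((not_opposite_iff.1 (hno w hw)).resolve_left
      fun e => h.notMem_of_mem_centers hp (e ▸ hw)).resolve_left hwp
  obtain ⟨r, hwr, hpr⟩ := hsp.2.2
  obtain ⟨-, D, hpD, hrD⟩ := id hpr
  obtain ⟨y, hy, hyD, hyp⟩ := h.exists_mem_notMem hp hpD
  obtain ⟨-, D', hyD', hpD'⟩ := id hyp
  have hDD' : D' ≠ D := fun e => hyD (e ▸ hyD')
  have hyw : Γ.Opposite y w := h.hex.opposite_of_path
    (h.hex.special_of_concurrent hDD' hpD' hpD hyD' hrD hyp.1 hpr.1.symm) hsp.symm hyp hpr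
    hwr.symm
  obtain ⟨A, hyA, hAD'⟩ := h.exists_line_ne y D'
  obtain ⟨r', hrA', hr'⟩ := h.exists_mem_centers_of_collinear hy hw hyw hp hyp hyA
  obtain ⟨w', hw', hwA', hwr'⟩ := h.exists_mem_notMem hr' hrA'
  have hry : r' ≠ y := fun e => h.notMem_of_mem_centers hr' (e ▸ hy)
  have hcry : Γ.Collinear r' y := ⟨hry, A, hrA', hyA⟩
  exact hno w' hw' (h.hex.opposite_of_path
    ⟨fun e => hwA' (e ▸ hyA), h.not_collinear w' hw' y hy, r', hwr', hcry.symm⟩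
    (h.hex.special_of_concurrent hAD' hyA hyD' hrA' hpD' hry hyp.1.symm) hwr' hcry hyp)

theorem exists_opposite_center_of_collinear (h : Γ.IsNoncollinearBlocking s t S)
    {w p x : Γ.Point} (hw : w ∈ S) (hp : p ∈ Γ.centers S) (hwp : Γ.Opposite w p)
    (hxp : Γ.Collinear x p) : ∃ u ∈ Γ.centers S, Γ.Opposite x u := by
  obtain ⟨-, D, hxD, hpD⟩ := id hxp
  obtain ⟨D', hpD', hDD'⟩ := h.exists_line_ne p D
  obtain ⟨z, hz, hwz⟩ := h.hex.exists_special_of_not_near (hwp.not_near hpD')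
  have hzp : z ≠ p := fun e => hwp.2.2 (e ▸ hwz)
  obtain ⟨u, hwu, hzu⟩ := hwz.2.2
  have hczp : Γ.Collinear z p := ⟨hzp, D', hz, hpD'⟩
  have hup : Γ.Special u p :=
    ⟨fun e => hwp.2.1 (e ▸ hwu), fun hup => not_opposite_of_collinear_of_collinear hwu hup hwp,
      z, hzu.symm, hczp.symm⟩
  exact ⟨u, h.mem_centers_of_path hw hp hwp hwu hzu.symm hczp, .symm <|
    h.hex.opposite_of_path hup
      (h.hex.special_of_concurrent hDD' hpD' hpD hz hxD hzp hxp.1) hzu.symm hczp hxp.symm⟩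

theorem exists_mem_centers_of_special (h : Γ.IsNoncollinearBlocking s t S) {x p : Γ.Point}
    {A : Γ.Line} (hx : x ∈ S) (hp : p ∈ Γ.centers S) (hsp : Γ.Special x p)
    (hxA : x ∈ Γ.pts A) : ∃ u ∈ Γ.pts A, u ∈ Γ.centers S := by
  obtain ⟨r, hxr, hpr⟩ := hsp.2.2
  obtain ⟨-, D, hpD, hrD⟩ := id hpr
  obtain ⟨y, hy, hyD⟩ := h.exists_mem_of_mem_centers hp hpD
  have hyr : y ≠ r := fun e => h.not_collinear x hx y hy (e ▸ hxr)
  have hr : r ∈ Γ.centers S :=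
    ⟨x, hx, y, hy, fun e => hsp.notMem hpD (e ▸ hyD), hxr, hyr, D, hyD, hrD⟩
  obtain ⟨v, hv, hvD, hvp⟩ := h.exists_mem_notMem hp hpD
  obtain ⟨-, D', hvD', hpD'⟩ := id hvp
  have hDD' : D ≠ D' := fun e => hvD (e ▸ hvD')
  have hxv : Γ.Opposite x v := h.hex.opposite_of_path hsp
    (h.hex.special_of_concurrent hDD' hpD hpD' hrD hvD' hpr.1.symm hvp.1) hxr hpr.symm hvp.symm
  exact h.exists_mem_centers_of_collinear hx hv hxv hr hxr hxA

theorem exists_mem_centers (h : Γ.IsNoncollinearBlocking s t S) {w p : Γ.Point} (hw : w ∈ S)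
    (hp : p ∈ Γ.centers S) (hwp : ¬ Γ.Collinear w p) {x : Γ.Point} {A : Γ.Line} (hx : x ∈ S)
    (hxA : x ∈ Γ.pts A) : ∃ u ∈ Γ.pts A, u ∈ Γ.centers S := by
  by_cases hxp : Γ.Opposite x p
  · exact h.exists_mem_centers_of_opposite hx hp hxp hxA
  rcases not_opposite_iff.1 hxp with rfl | hc | hsp
  · exact absurd hx (h.notMem_of_mem_centers hp)
  · obtain ⟨w', hw', hwp'⟩ := h.exists_opposite_of_mem_centers hw hp hwp
    obtain ⟨u, hu, hxu⟩ := h.exists_opposite_center_of_collinear hw' hp hwp' hc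
    exact h.exists_mem_centers_of_opposite hx hu hxu hxA
  · exact h.exists_mem_centers_of_special hx hp hsp hxA

end IsNoncollinearBlocking

/-! ### The subhexagon on a saturated blocking set and its centres -/

/-- The geometry induced on the members of `S` and the centres of `S`, with the lines of `Γ`
meeting `S`. -/
def subgeometry (Γ : GenHexagon) (S : Set Γ.Point) : GenHexagon where
  Point := {u : Γ.Point // u ∈ S ∪ Γ.centers S}
  Line := {L : Γ.Line // ∃ x ∈ S, x ∈ Γ.pts L}
  pts L := {u | u.1 ∈ Γ.pts L.1}

/-- A noncollinear blocking set such that every line meeting it contains a centre. -/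
structure IsSaturated (Γ : GenHexagon) (s t : ℕ) (S : Set Γ.Point) : Prop
    extends Γ.IsNoncollinearBlocking s t S where
  saturated : ∀ x ∈ S, ∀ A, x ∈ Γ.pts A → ∃ u ∈ Γ.pts A, u ∈ Γ.centers S

namespace IsSaturated

variable {s t : ℕ} {S : Set Γ.Point}

theorem exists_mem_of_collinear_of_collinear_of_ne (h : Γ.IsSaturated s t S) {L : Γ.Line}
    {x w c d : Γ.Point} (hx : x ∈ S) (hw : w ∈ S) (hxw : x ≠ w) (hc : c ∈ Γ.pts L)
    (hd : d ∈ Γ.pts L) (hxc : Γ.Collinear x c) (hwd : Γ.Collinear w d) :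
    ∃ z ∈ S, z ∈ Γ.pts L := by
  obtain ⟨-, D, hxD, hcD⟩ := id hxc
  obtain ⟨r, hrD, hr⟩ := h.saturated x hx D hxD
  by_cases hcr : c = r
  · exact h.exists_mem_of_mem_centers (hcr ▸ hr) hc
  · exact h.exists_mem_of_center_collinear hx hw hxw (.inr ⟨c, hc, hxc⟩) (.inr ⟨d, hd, hwd⟩) hc
      ⟨hcr, D, hcD, hrD⟩ hr

theorem exists_mem_of_mem_union (h : Γ.IsSaturated s t S) {u : Γ.Point} {L : Γ.Line}
    (hu : u ∈ S ∪ Γ.centers S) (huL : u ∈ Γ.pts L) : ∃ x ∈ S, x ∈ Γ.pts L :=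
  hu.elim (fun hu => ⟨u, hu, huL⟩) fun hu => h.exists_mem_of_mem_centers hu huL

theorem mem_union_of_mem_of_mem (h : Γ.IsSaturated s t S) {x x' c : Γ.Point} {L M : Γ.Line}
    (hLM : L ≠ M) (hx : x ∈ S) (hxL : x ∈ Γ.pts L) (hx' : x' ∈ S) (hxM' : x' ∈ Γ.pts M)
    (hcL : c ∈ Γ.pts L) (hcM : c ∈ Γ.pts M) : c ∈ S ∪ Γ.centers S := by
  by_cases hxc : x = c
  · exact Or.inl (hxc ▸ hx)
  by_cases hxc' : x' = c
  · exact Or.inl (hxc' ▸ hx')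
  refine Or.inr ⟨x, hx, x', hx', ?_, ⟨hxc, L, hxL, hcL⟩, hxc', M, hxM', hcM⟩
  rintro rfl
  exact hLM (h.hex.line_unique hxc hxL hcL hxM' hcM)

theorem mem_union_of_collinear (h : Γ.IsSaturated s t S) {u y : Γ.Point} {L : Γ.Line}
    (hu : u ∈ S ∪ Γ.centers S) (hL : ∃ x ∈ S, x ∈ Γ.pts L) (hy : y ∈ Γ.pts L)
    (huL : u ∉ Γ.pts L) (huy : Γ.Collinear u y) : y ∈ S ∪ Γ.centers S := by
  obtain ⟨-, M, huM, hyM⟩ := huy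
  obtain ⟨v, hv, hvM⟩ := h.exists_mem_of_mem_union hu huM
  obtain ⟨x, hx, hxL⟩ := hL
  exact h.mem_union_of_mem_of_mem (by rintro rfl; exact huL huM) hv hvM hx hxL hyM hy

theorem mem_union_of_path (h : Γ.IsSaturated s t S) {u c y : Γ.Point} {L : Γ.Line}
    (hu : u ∈ S ∪ Γ.centers S) (hL : ∃ x ∈ S, x ∈ Γ.pts L) (hy : y ∈ Γ.pts L)
    (huL : ¬ Γ.Near u L) (huc : Γ.Collinear u c) (hcy : Γ.Collinear c y) :
    y ∈ S ∪ Γ.centers S := by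
  obtain ⟨-, M, huM, hcM⟩ := id huc
  obtain ⟨-, N, hcN, hyN⟩ := id hcy
  obtain ⟨v, hv, hvM⟩ := h.exists_mem_of_mem_union hu huM
  obtain ⟨x, hx, hxL⟩ := id hL
  have notMem {z : Γ.Point} {K : Γ.Line} (hzL : z ∈ Γ.pts L) (huK : u ∈ Γ.pts K) :
      z ∉ Γ.pts K := fun hzK =>
    huL (.inr ⟨z, hzL, fun e => huL (.inl (e ▸ hzL)), K, huK, hzK⟩)
  have hmeet : ∃ z ∈ S, z ∈ Γ.pts N := by
    by_cases hvc : v = c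
    · exact ⟨v, hv, hvc ▸ hcN⟩
    by_cases hxy : x = y
    · exact ⟨x, hx, hxy ▸ hyN⟩
    exact h.exists_mem_of_collinear_of_collinear_of_ne hv hx
      (fun e => notMem hxL huM (e ▸ hvM)) hcN hyN ⟨hvc, M, hvM, hcM⟩ ⟨hxy, L, hxL, hy⟩
  have hc := h.mem_union_of_collinear hu hmeet hcN (fun huN => notMem hy huN hyN) huc
  exact h.mem_union_of_collinear hc hL hy (fun hcL => huL (.inr ⟨c, hcL, huc⟩)) hcy

theorem subgeometry_collinear_iff (h : Γ.IsSaturated s t S) {u v : (Γ.subgeometry S).Point} :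
    (Γ.subgeometry S).Collinear u v ↔ Γ.Collinear u.1 v.1 := by
  constructor
  · rintro ⟨hne, L, hu, hv⟩
    exact ⟨fun e => hne (Subtype.ext e), L.1, hu, hv⟩
  · rintro ⟨hne, L, hu, hv⟩
    exact ⟨fun e => hne (e ▸ rfl), ⟨L, h.exists_mem_of_mem_union u.2 hu⟩, hu, hv⟩

theorem subgeometry_special_iff (h : Γ.IsSaturated s t S) {u v : (Γ.subgeometry S).Point} :
    (Γ.subgeometry S).Special u v ↔ Γ.Special u.1 v.1 := by
  constructor
  · rintro ⟨hne, hnc, c, huc, hvc⟩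
    exact ⟨fun e => hne (Subtype.ext e), fun hc => hnc (h.subgeometry_collinear_iff.2 hc), c.1,
      h.subgeometry_collinear_iff.1 huc, h.subgeometry_collinear_iff.1 hvc⟩
  · rintro ⟨hne, hnc, c, huc, hvc⟩
    obtain ⟨-, M, huM, hcM⟩ := id huc
    obtain ⟨-, N, hvN, hcN⟩ := id hvc
    obtain ⟨x, hx, hxM⟩ := h.exists_mem_of_mem_union u.2 huM
    obtain ⟨y, hy, hyN⟩ := h.exists_mem_of_mem_union v.2 hvN
    have hMN : M ≠ N := fun e => hnc ⟨hne, M, huM, e ▸ hvN⟩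
    exact ⟨fun e => hne (e ▸ rfl), fun hc => hnc (h.subgeometry_collinear_iff.1 hc),
      ⟨c, h.mem_union_of_mem_of_mem hMN hx hxM hy hyN hcM hcN⟩,
      h.subgeometry_collinear_iff.2 huc, h.subgeometry_collinear_iff.2 hvc⟩

theorem subgeometry_exists_not_opposite (h : Γ.IsSaturated s t S)
    (x : (Γ.subgeometry S).Point) (L : (Γ.subgeometry S).Line) :
    ∃ y ∈ (Γ.subgeometry S).pts L, ¬ (Γ.subgeometry S).Opposite x y := by
  by_cases hxL : x.1 ∈ Γ.pts L.1
  · exact ⟨x, hxL, not_opposite_self x⟩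
  by_cases hnear : Γ.Near x.1 L.1
  · obtain ⟨a, ha, hxa⟩ := hnear.resolve_left hxL
    exact ⟨⟨a, h.mem_union_of_collinear x.2 L.2 ha hxL hxa⟩, ha,
      (h.subgeometry_collinear_iff.2 hxa).not_opposite⟩
  · obtain ⟨y, hy, hsp⟩ := h.hex.exists_special_of_not_near hnear
    obtain ⟨c, hxc, hyc⟩ := hsp.2.2
    exact ⟨⟨y, h.mem_union_of_path x.2 L.2 hy hnear hxc hyc.symm⟩, hy,
      (h.subgeometry_special_iff.2 hsp).not_opposite⟩

theorem isHex_subgeometry (h : Γ.IsSaturated s t S) : (Γ.subgeometry S).IsHex where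
  line_unique hxy h₁ h₂ h₃ h₄ :=
    Subtype.ext (h.hex.line_unique (fun e => hxy (Subtype.ext e)) h₁ h₂ h₃ h₄)
  no_triangle {x a b L} hab ha hb hxa hxb :=
    h.hex.no_triangle (x := x.1) (L := L.1) (fun e => hab (Subtype.ext e)) ha hb
      (h.subgeometry_collinear_iff.1 hxa) (h.subgeometry_collinear_iff.1 hxb)
  no_quadrangle hxy hnc h₁ h₂ h₃ h₄ :=
    Subtype.ext (h.hex.no_quadrangle (fun e => hxy (Subtype.ext e))
      (fun hc => hnc (h.subgeometry_collinear_iff.2 hc)) (h.subgeometry_collinear_iff.1 h₁)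
      (h.subgeometry_collinear_iff.1 h₂) (h.subgeometry_collinear_iff.1 h₃)
      (h.subgeometry_collinear_iff.1 h₄))
  no_pentagon {x a b L} hab ha hb hxa hxb := by
    obtain ⟨c, hc, hxc⟩ := h.hex.no_pentagon (x := x.1) (L := L.1)
      (fun e => hab (Subtype.ext e)) ha hb (h.subgeometry_special_iff.1 hxa)
      (h.subgeometry_special_iff.1 hxb)
    have hxL : x.1 ∉ Γ.pts L.1 := (h.subgeometry_special_iff.1 hxa).notMem ha
    exact ⟨⟨c, h.mem_union_of_collinear x.2 L.2 hc hxL hxc⟩, hc,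
      h.subgeometry_collinear_iff.2 hxc⟩
  exists_not_opposite := h.subgeometry_exists_not_opposite

theorem encard_lines_subgeometry (h : Γ.IsSaturated s t S) (u : (Γ.subgeometry S).Point) :
    {L | u ∈ (Γ.subgeometry S).pts L}.encard = t + 1 := by
  have himage := Function.Injective.encard_image (f := Subtype.val) Subtype.val_injective
    {L | u ∈ (Γ.subgeometry S).pts L}
  refine himage.symm.trans ((congrArg Set.encard (Set.ext fun L => ?_)).trans (h.order.2 u.1))
  exact ⟨fun ⟨_, hL, e⟩ => e ▸ hL,
    fun hL => ⟨⟨L, h.exists_mem_of_mem_union u.2 hL⟩, hL, rfl⟩⟩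

theorem nontrivial_pts_subgeometry (h : Γ.IsSaturated s t S) (L : (Γ.subgeometry S).Line) :
    ((Γ.subgeometry S).pts L).Nontrivial := by
  obtain ⟨x, hx, hxL⟩ := L.2
  obtain ⟨r, hrL, hr⟩ := h.saturated x hx L.1 hxL
  exact ⟨⟨x, Or.inl hx⟩, hxL, ⟨r, Or.inr hr⟩, hrL,
    fun e => ne_of_mem_of_not_mem hx (h.notMem_of_mem_centers hr) (congrArg Subtype.val e)⟩

theorem finite_pts_subgeometry (h : Γ.IsSaturated s t S) (L : (Γ.subgeometry S).Line) :
    ((Γ.subgeometry S).pts L).Finite :=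
  (h.order.finite_pts L.1).preimage Subtype.val_injective.injOn

end IsSaturated

theorem OppLines.symm {L M : Γ.Line} (hLM : Γ.OppLines L M) : Γ.OppLines M L :=
  ⟨fun x hx hx' => hLM.1 x hx' hx, fun x hx y hy hc => hLM.2 y hy x hx hc.symm⟩

namespace IsHex

theorem encard_pts_le_of_oppLines (h : Γ.IsHex) {L M : Γ.Line} (hLM : Γ.OppLines L M) :
    (Γ.pts L).encard ≤ (Γ.pts M).encard :=
  encard_le_encard_of_rel (r := Γ.Special)
    (fun _ hx => h.exists_special_of_not_near (hLM.not_near hx))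
    fun _ hx _ hx' _ hy hxy hxy' =>
      h.eq_of_special_of_not_near (hLM.symm.not_near hy) hx hx' hxy.symm hxy'.symm

theorem encard_pts_eq_of_oppLines (h : Γ.IsHex) {L M : Γ.Line} (hLM : Γ.OppLines L M) :
    (Γ.pts L).encard = (Γ.pts M).encard :=
  (h.encard_pts_le_of_oppLines hLM).antisymm (h.encard_pts_le_of_oppLines hLM.symm)

theorem encard_pts_eq_of_concurrent (h : Γ.IsHex) (hl : ∀ x, 2 < {L | x ∈ Γ.pts L}.encard)
    (hp : ∀ L, (Γ.pts L).Nontrivial) {u : Γ.Point} {L M : Γ.Line} (huL : u ∈ Γ.pts L)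
    (huM : u ∈ Γ.pts M) : (Γ.pts L).encard = (Γ.pts M).encard := by
  obtain ⟨K, huK, hKL, hKM⟩ := exists_mem_ne_ne_of_two_lt_encard (hl u) L M
  obtain ⟨v, hv, hvu⟩ := (hp K).exists_ne u
  obtain ⟨D, hvD, hDK, -⟩ := exists_mem_ne_ne_of_two_lt_encard (hl v) K K
  obtain ⟨w, hw, hwv⟩ := (hp D).exists_ne v
  obtain ⟨N, hwN, hND, -⟩ := exists_mem_ne_ne_of_two_lt_encard (hl w) D D
  have oppLines {L : Γ.Line} (huL : u ∈ Γ.pts L) (hKL : K ≠ L) : Γ.OppLines L N :=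
    h.oppLines_of_path (h.special_of_concurrent hDK.symm hv hvD huK hw hvu.symm hwv)
      ⟨hvu.symm, K, huK, hv⟩ ⟨hwv, D, hw, hvD⟩ huL hwN
      (fun hvL => hKL (h.line_unique hvu hv huK hvL huL))
      (fun hvN => hND (h.line_unique hwv hwN hvN hw hvD)) ((hp L).exists_ne u)
      ((hp N).exists_ne w)
  exact (h.encard_pts_eq_of_oppLines (oppLines huL hKL)).trans
    (h.encard_pts_eq_of_oppLines (oppLines huM hKM)).symm

theorem encard_pts_eq (h : Γ.IsHex) (hl : ∀ x, 2 < {L | x ∈ Γ.pts L}.encard)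
    (hp : ∀ L, (Γ.pts L).Nontrivial) (L M : Γ.Line) :
    (Γ.pts L).encard = (Γ.pts M).encard := by
  have hconc {u : Γ.Point} {L M : Γ.Line} :=
    h.encard_pts_eq_of_concurrent hl hp (u := u) (L := L) (M := M)
  obtain ⟨x, hx⟩ := (hp L).nonempty
  obtain ⟨y, hy, hxy⟩ := h.exists_not_opposite x M
  rcases not_opposite_iff.1 hxy with rfl | ⟨-, K, hxK, hyK⟩ |
    ⟨-, -, z, ⟨-, K, hxK, hzK⟩, -, K', hyK', hzK'⟩
  · exact hconc hx hy
  · exact (hconc hx hxK).trans (hconc hyK hy)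
  · exact (hconc hx hxK).trans ((hconc hzK hzK').trans (hconc hyK' hy))

end IsHex

theorem IsSaturated.exists_hasOrder_subgeometry {s t : ℕ} {S : Set Γ.Point}
    (h : Γ.IsSaturated s t S) : ∃ e, 0 < e ∧ (Γ.subgeometry S).HasOrder e t := by
  obtain ⟨x, hx⟩ := h.nontrivial.nonempty
  obtain ⟨L, hxL⟩ := h.order.exists_line x
  let L₀ : (Γ.subgeometry S).Line := ⟨L, x, hx, hxL⟩
  have hcard : 1 < ((Γ.subgeometry S).pts L₀).ncard :=
    Set.one_lt_ncard_iff_nontrivial_and_finite.2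
      ⟨h.nontrivial_pts_subgeometry L₀, h.finite_pts_subgeometry L₀⟩
  have hlines (u : (Γ.subgeometry S).Point) : 2 < {L | u ∈ (Γ.subgeometry S).pts L}.encard := by
    have := h.one_lt_t
    rw [h.encard_lines_subgeometry]
    exact_mod_cast (by omega : 2 < t + 1)
  refine ⟨((Γ.subgeometry S).pts L₀).ncard - 1, by omega, fun M => ?_, h.encard_lines_subgeometry⟩
  rw [h.isHex_subgeometry.encard_pts_eq hlines h.nontrivial_pts_subgeometry M L₀,
    ← (h.finite_pts_subgeometry L₀).cast_ncard_eq]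
  exact_mod_cast (by omega : ((Γ.subgeometry S).pts L₀).ncard = _ - 1 + 1)

/-! ### Intersection numbers -/

namespace HasOrder

variable {s t : ℕ}

theorem ncard_pts (h : Γ.HasOrder s t) (L : Γ.Line) : (Γ.pts L).ncard = s + 1 := by
  have := h.1 L
  rw [← (h.finite_pts L).cast_ncard_eq] at this
  exact_mod_cast this

theorem ncard_lines (h : Γ.HasOrder s t) (x : Γ.Point) : {L | x ∈ Γ.pts L}.ncard = t + 1 := by
  have := h.2 x
  rw [← (h.finite_lines x).cast_ncard_eq] at this
  exact_mod_cast this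

theorem ncard_pts_sdiff_pair (h : Γ.HasOrder s t) {x y : Γ.Point} {L : Γ.Line} (hxy : x ≠ y)
    (hx : x ∈ Γ.pts L) (hy : y ∈ Γ.pts L) : (Γ.pts L \ {x, y}).ncard = s - 1 := by
  rw [Set.ncard_sdiff (by rintro v (rfl | rfl) <;> assumption), Set.ncard_pair hxy, h.ncard_pts]
  rfl

end HasOrder

theorem setOf_collinear (x : Γ.Point) :
    {z | Γ.Collinear x z} = ⋃ L ∈ {L | x ∈ Γ.pts L}, Γ.pts L \ {x} := by
  ext z
  simp only [Collinear, Set.mem_ofPred_eq, Set.mem_iUnion, Set.mem_sdiff, Set.mem_singleton_iff,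
    exists_prop]
  exact ⟨fun ⟨hne, L, hx, hz⟩ => ⟨L, hx, hz, hne.symm⟩,
    fun ⟨L, hx, hz, hne⟩ => ⟨Ne.symm hne, L, hx, hz⟩⟩

theorem HasOrder.finite_collinear {s t : ℕ} (h : Γ.HasOrder s t) (x : Γ.Point) :
    {z | Γ.Collinear x z}.Finite := by
  rw [setOf_collinear]
  exact (h.finite_lines x).biUnion fun L _ => (h.finite_pts L).subset Set.sdiff_subset

theorem HasOrder.finite_not_opposite {s t : ℕ} (h : Γ.HasOrder s t) (x : Γ.Point) :
    {z | ¬ Γ.Opposite x z}.Finite := by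
  refine ((Set.finite_singleton x).union ((h.finite_collinear x).union
    ((h.finite_collinear x).biUnion fun c _ => h.finite_collinear c))).subset fun z hz => ?_
  rcases not_opposite_iff.1 hz with rfl | hxz | ⟨-, -, c, hxc, hzc⟩
  · exact .inl rfl
  · exact .inr (.inl hxz)
  · exact .inr (.inr (Set.mem_biUnion hxc hzc.symm))

namespace IsHex

variable {s t : ℕ}

theorem finite_point (h : Γ.IsHex) (hord : Γ.HasOrder s t) : Finite Γ.Point := by
  cases isEmpty_or_nonempty Γ.Point
  · infer_instance
  let x := Classical.arbitrary Γ.Point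
  have hball := (hord.finite_not_opposite x).biUnion fun z _ => hord.finite_not_opposite z
  refine Set.finite_univ_iff.1 (hball.subset fun y _ => ?_)
  obtain ⟨L, hyL⟩ := hord.exists_line y
  obtain ⟨z, hzL, hxz⟩ := h.exists_not_opposite x L
  exact Set.mem_biUnion hxz (not_opposite_of_mem_of_mem hzL hyL hyL hyL)

theorem finite_line (h : Γ.IsHex) (hord : Γ.HasOrder s t) (hs : 0 < s) : Finite Γ.Line := by
  have := h.finite_point hord
  refine Finite.of_injective Γ.pts fun L M hLM => ?_
  obtain ⟨x, y, hx, hy, hxy⟩ := (Set.one_lt_ncard_iff (hord.finite_pts L)).1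
    (by rw [hord.ncard_pts]; omega)
  exact h.line_unique hxy hx hy (hLM ▸ hx) (hLM ▸ hy)

theorem ncard_collinear (h : Γ.IsHex) (hord : Γ.HasOrder s t) (x : Γ.Point) :
    {z | Γ.Collinear x z}.ncard = s * (t + 1) := by
  have hcard : ∀ L ∈ {L | x ∈ Γ.pts L}, (Γ.pts L \ {x}).ncard = s := fun L hL => by
    rw [Set.ncard_sdiff_singleton_of_mem (show x ∈ Γ.pts L from hL), hord.ncard_pts,
      Nat.add_sub_cancel]
  have hdisj : {L | x ∈ Γ.pts L}.PairwiseDisjoint fun L => Γ.pts L \ {x} :=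
    fun L hL M hM hLM => Set.disjoint_left.2 fun z hz hz' =>
      hLM (h.line_unique hz.2 hz.1 hL hz'.1 hM)
  rw [setOf_collinear, (hord.finite_lines x).ncard_biUnion
    (fun L _ => (hord.finite_pts L).subset Set.sdiff_subset) hdisj, finsum_mem_congr rfl hcard,
    finsum_mem_eq_finite_toFinset_sum _ (hord.finite_lines x), Finset.sum_const,
    ← Set.ncard_eq_toFinset_card _ (hord.finite_lines x), hord.ncard_lines, smul_eq_mul, mul_comm]

theorem ncard_collinear_collinear (h : Γ.IsHex) (hord : Γ.HasOrder s t) {x y : Γ.Point}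
    (hxy : Γ.Collinear x y) : {z | Γ.Collinear x z ∧ Γ.Collinear z y}.ncard = s - 1 := by
  obtain ⟨hne, L, hx, hy⟩ := hxy
  rw [← hord.ncard_pts_sdiff_pair hne hx hy]
  congr 1
  ext z
  simp only [Set.mem_ofPred_eq, Set.mem_sdiff, Set.mem_insert_iff, Set.mem_singleton_iff, not_or]
  exact ⟨fun hz => ⟨h.no_triangle hne hx hy hz.1.symm hz.2, hz.1.1.symm, hz.2.1⟩,
    fun hz => ⟨⟨Ne.symm hz.2.1, L, hx, hz.1⟩, hz.2.2, L, hz.1, hy⟩⟩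

theorem ncard_collinear_collinear_of_special (h : Γ.IsHex) {x y : Γ.Point}
    (hxy : Γ.Special x y) : {z | Γ.Collinear x z ∧ Γ.Collinear z y}.ncard = 1 := by
  obtain ⟨hne, hnc, c, hxc, hyc⟩ := hxy
  refine Set.ncard_eq_one.2 ⟨c, Set.ext fun z => ⟨fun hz => ?_, ?_⟩⟩
  · exact h.no_quadrangle hne hnc hz.1 hz.2.symm hxc hyc
  · rintro rfl
    exact ⟨hxc, hyc.symm⟩

theorem ncard_collinear_special_of_collinear (h : Γ.IsHex) (hord : Γ.HasOrder s t)
    {x y : Γ.Point} (hxy : Γ.Collinear x y) :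
    {z | Γ.Collinear x z ∧ Γ.Special z y}.ncard = s * t := by
  obtain ⟨hne, L, hx, hy⟩ := hxy
  have heq : {z | Γ.Collinear x z ∧ Γ.Special z y} =
      {z | Γ.Collinear x z} \ (Γ.pts L \ {x}) := by
    ext z
    simp only [Set.mem_ofPred_eq, Set.mem_sdiff, Set.mem_singleton_iff, not_and, not_not]
    refine and_congr_right fun hxz => ⟨fun hzy hzL => absurd hzL (hzy.notMem hy), fun hz => ?_⟩
    exact h.special_of_collinear (fun hzL => hxz.1 (hz hzL).symm) hx hy hne.symm hxz.symm
  have hsub : Γ.pts L \ {x} ⊆ {z | Γ.Collinear x z} := fun z hz =>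
    ⟨fun e => hz.2 e.symm, L, hx, hz.1⟩
  rw [heq, Set.ncard_sdiff hsub ((hord.finite_pts L).subset Set.sdiff_subset),
    Set.ncard_sdiff_singleton_of_mem hx, hord.ncard_pts, h.ncard_collinear hord, Nat.mul_succ,
    Nat.add_sub_cancel, Nat.add_sub_cancel]

theorem ncard_collinear_special_of_special (h : Γ.IsHex) (hord : Γ.HasOrder s t)
    {x y : Γ.Point} (hxy : Γ.Special x y) :
    {z | Γ.Collinear x z ∧ Γ.Special z y}.ncard = s - 1 := by
  obtain ⟨-, -, c, hxc, hyc⟩ := id hxy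
  obtain ⟨hxc', L, hx, hc⟩ := id hxc
  rw [← hord.ncard_pts_sdiff_pair hxc' hx hc]
  congr 1
  ext z
  simp only [Set.mem_ofPred_eq, Set.mem_sdiff, Set.mem_insert_iff, Set.mem_singleton_iff, not_or]
  constructor
  · rintro ⟨hxz, hzy⟩
    refine ⟨?_, hxz.1.symm, fun e => hzy.2.1 (e ▸ hyc.symm)⟩
    by_contra hzL
    exact hzy.not_opposite (h.opposite_of_path
      (h.special_of_collinear hzL hx hc hxc'.symm hxz.symm) hxy hxz.symm hxc hyc.symm)
  · rintro ⟨hzL, hzx, hzc⟩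
    exact ⟨⟨Ne.symm hzx, L, hx, hzL⟩,
      (h.special_of_collinear (hxy.symm.notMem hx) hc hzL hzc hyc).symm⟩

theorem ncard_collinear_special_of_opposite (h : Γ.IsHex) (hord : Γ.HasOrder s t)
    {x y : Γ.Point} (hxy : Γ.Opposite x y) :
    {z | Γ.Collinear x z ∧ Γ.Special z y}.ncard = t + 1 := by
  have ne {z : Γ.Point} (hz : Γ.Special z y) : x ≠ z := fun e => hxy.2.2 (e ▸ hz)
  rw [← hord.ncard_lines x]
  refine congrArg ENat.toNat (le_antisymm ?_ ?_)
  · refine encard_le_encard_of_rel (r := fun z L => z ∈ Γ.pts L)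
      (fun z hz => hz.1.2.imp fun _ hL => hL) fun z hz z' hz' L hL hzL hzL' => ?_
    exact h.eq_of_special_of_not_near (hxy.symm.not_near hL) hzL hzL' hz.2.symm hz'.2.symm
  · refine encard_le_encard_of_rel (r := fun L z => z ∈ Γ.pts L) (fun L hL => ?_)
      fun L hL L' hL' z hz hzL hzL' => h.line_unique (ne hz.2) hL hzL hL' hzL'
    obtain ⟨z, hzL, hyz⟩ := h.exists_special_of_not_near (hxy.symm.not_near hL)
    exact ⟨z, ⟨⟨ne hyz.symm, L, hL, hzL⟩, hyz.symm⟩, hzL⟩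

end IsHex

/-! ### The Feit–Higman conditions -/

theorem eq_or_collinear_or_special_or_opposite (x y : Γ.Point) :
    x = y ∨ Γ.Collinear x y ∨ Γ.Special x y ∨ Γ.Opposite x y := by
  by_cases h : Γ.Opposite x y
  · exact .inr (.inr (.inr h))
  · rcases not_opposite_iff.1 h with h | h | h <;> simp only [h, true_or, or_true]

theorem eq_sum_smul_relMatrix [DecidableEq Γ.Point] {M : Matrix Γ.Point Γ.Point ℝ}
    {a b c d : ℝ} (self : ∀ x, M x x = a) (collinear : ∀ x y, Γ.Collinear x y → M x y = b)
    (special : ∀ x y, Γ.Special x y → M x y = c)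
    (opposite : ∀ x y, Γ.Opposite x y → M x y = d) :
    M = a • 1 + b • relMatrix Γ.Collinear + c • relMatrix Γ.Special +
      d • relMatrix Γ.Opposite := by
  ext x y
  simp only [Matrix.add_apply, Matrix.smul_apply, smul_eq_mul]
  rcases eq_or_collinear_or_special_or_opposite x y with rfl | h | h | h
  · simp [self, relMatrix_apply_of_not fun h : Γ.Collinear x x => h.1 rfl,
      relMatrix_apply_of_not fun h : Γ.Special x x => h.1 rfl,
      relMatrix_apply_of_not (not_opposite_self x)]
  · simp [collinear x y h, h.1, relMatrix_apply_of h, relMatrix_apply_of_not h.not_opposite,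
      relMatrix_apply_of_not fun h' : Γ.Special x y => h'.2.1 h]
  · simp [special x y h, h.1, relMatrix_apply_of h, relMatrix_apply_of_not h.not_opposite,
      relMatrix_apply_of_not h.2.1]
  · simp [opposite x y h, h.1, relMatrix_apply_of h, relMatrix_apply_of_not h.2.1,
      relMatrix_apply_of_not h.2.2]

theorem sum_relMatrix [DecidableEq Γ.Point] :
    (1 : Matrix Γ.Point Γ.Point ℝ) + relMatrix Γ.Collinear + relMatrix Γ.Special +
      relMatrix Γ.Opposite = relMatrix fun _ _ => True := by
  have apply_eq_one (x y : Γ.Point) : relMatrix (fun _ _ : Γ.Point => True) x y = 1 :=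
    relMatrix_apply_of trivial
  rw [eq_sum_smul_relMatrix (fun x => apply_eq_one x x) (fun x y _ => apply_eq_one x y)
    (fun x y _ => apply_eq_one x y) fun x y _ => apply_eq_one x y]
  simp only [one_smul]

theorem trace_relMatrix_collinear [Fintype Γ.Point] : (relMatrix Γ.Collinear).trace = 0 :=
  trace_relMatrix_eq_zero fun _ h => h.1 rfl

namespace IsHex

variable {s t : ℕ} [Fintype Γ.Point]

theorem collinear_mul_collinear [DecidableEq Γ.Point] (h : Γ.IsHex) (hord : Γ.HasOrder s t)
    (hs : 0 < s) : relMatrix Γ.Collinear * relMatrix Γ.Collinear =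
      (s * (t + 1) : ℝ) • (1 : Matrix Γ.Point Γ.Point ℝ) +
        (s - 1 : ℝ) • relMatrix Γ.Collinear + relMatrix Γ.Special := by
  rw [eq_sum_smul_relMatrix (M := relMatrix Γ.Collinear * relMatrix Γ.Collinear)
    (a := s * (t + 1)) (b := s - 1) (c := 1) (d := 0), one_smul, zero_smul, add_zero]
  · intro x
    have : {z | Γ.Collinear x z ∧ Γ.Collinear z x} = {z | Γ.Collinear x z} :=
      Set.ext fun z => ⟨And.left, fun hz => ⟨hz, hz.symm⟩⟩
    rw [relMatrix_mul_apply, this, h.ncard_collinear hord]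
    push_cast
    rfl
  · intro x y hxy
    rw [relMatrix_mul_apply, h.ncard_collinear_collinear hord hxy, Nat.cast_pred hs]
  · intro x y hxy
    rw [relMatrix_mul_apply, h.ncard_collinear_collinear_of_special hxy, Nat.cast_one]
  · intro x y hxy
    have : {z | Γ.Collinear x z ∧ Γ.Collinear z y} = ∅ :=
      Set.eq_empty_of_forall_notMem fun z hz =>
        not_opposite_of_collinear_of_collinear hz.1 hz.2 hxy
    rw [relMatrix_mul_apply, this, Set.ncard_empty, Nat.cast_zero]

theorem collinear_mul_special (h : Γ.IsHex) (hord : Γ.HasOrder s t) (hs : 0 < s) :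
    relMatrix Γ.Collinear * relMatrix Γ.Special = (s * t : ℝ) • relMatrix Γ.Collinear +
      (s - 1 : ℝ) • relMatrix Γ.Special + (t + 1 : ℝ) • relMatrix Γ.Opposite := by
  classical
  rw [eq_sum_smul_relMatrix (M := relMatrix Γ.Collinear * relMatrix Γ.Special)
    (a := 0) (b := s * t) (c := s - 1) (d := t + 1), zero_smul, zero_add]
  · intro x
    have : {z | Γ.Collinear x z ∧ Γ.Special z x} = ∅ :=
      Set.eq_empty_of_forall_notMem fun z hz => hz.2.2.1 hz.1.symm
    rw [relMatrix_mul_apply, this, Set.ncard_empty, Nat.cast_zero]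
  · intro x y hxy
    rw [relMatrix_mul_apply, h.ncard_collinear_special_of_collinear hord hxy, Nat.cast_mul]
  · intro x y hxy
    rw [relMatrix_mul_apply, h.ncard_collinear_special_of_special hord hxy, Nat.cast_pred hs]
  · intro x y hxy
    rw [relMatrix_mul_apply, h.ncard_collinear_special_of_opposite hord hxy, Nat.cast_succ]

theorem collinear_mul_true (h : Γ.IsHex) (hord : Γ.HasOrder s t) :
    relMatrix Γ.Collinear * relMatrix (fun _ _ => True) =
      (s * (t + 1) : ℝ) • relMatrix fun _ _ => True := by
  rw [relMatrix_mul_relMatrix_true (h.ncard_collinear hord)]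
  push_cast
  rfl

theorem cubic_collinear [DecidableEq Γ.Point] (h : Γ.IsHex) (hord : Γ.HasOrder s t)
    (hs : 0 < s) :
    (relMatrix Γ.Collinear + (t + 1 : ℝ) • 1) *
        ((relMatrix Γ.Collinear - (s - 1 : ℝ) • 1) ^ 2 - (s * t : ℝ) • 1) =
      (t + 1 : ℝ) • relMatrix fun _ _ => True := by
  have hsq := h.collinear_mul_collinear hord hs
  have hcs := h.collinear_mul_special hord hs
  have hcube := congrArg (relMatrix Γ.Collinear * ·) hsq
  simp only [mul_add, mul_smul_comm, mul_one] at hcube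
  simp only [sq, add_mul, mul_sub, sub_mul, smul_mul_assoc, mul_smul_comm, one_mul, mul_one]
  linear_combination (norm := module) (t + 1 : ℝ) • sum_relMatrix (Γ := Γ) + hcube + hcs +
    (t + 2 - s : ℝ) • hsq

theorem card_point_eq [Nonempty Γ.Point] (h : Γ.IsHex) (hord : Γ.HasOrder s t) (hs : 0 < s) :
    (Fintype.card Γ.Point : ℝ) = (s + 1) * (1 + s * t + s ^ 2 * t ^ 2) := by
  classical
  have hAJ := h.collinear_mul_true hord
  have hJJ := relMatrix_mul_relMatrix_true (r := fun _ _ : Γ.Point => True)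
    (k := Fintype.card Γ.Point) fun _ => by
      rw [Set.ofPred_true, Set.ncard_univ, Nat.card_eq_fintype_card]
  -- Compare the two sides of the cubic relation on the all-ones matrix.
  have hcubic := congrArg (· * relMatrix fun _ _ => True) (h.cubic_collinear hord hs)
  simp only [sq, mul_assoc, add_mul, sub_mul, mul_add, mul_sub, smul_mul_assoc, mul_smul_comm,
    one_mul, hAJ, hJJ, smul_smul, ← add_smul, ← sub_smul] at hcubic
  have hval := smul_left_injective ℝ relMatrix_true_ne_zero hcubic
  have hpos : (0 : ℝ) < t + 1 := by positivity
  exact mul_right_cancel₀ hpos.ne' (by linear_combination -hval)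

theorem trace_collinear_sq [DecidableEq Γ.Point] (h : Γ.IsHex) (hord : Γ.HasOrder s t)
    (hs : 0 < s) : (relMatrix Γ.Collinear ^ 2).trace = Fintype.card Γ.Point * (s * (t + 1)) := by
  rw [sq, h.collinear_mul_collinear hord hs, Matrix.trace_add, Matrix.trace_add,
    Matrix.trace_smul, Matrix.trace_smul, Matrix.trace_one, trace_relMatrix_collinear,
    trace_relMatrix_eq_zero fun _ h => h.1 rfl]
  simp only [smul_eq_mul, mul_zero, add_zero]
  ring

theorem trace_collinear_cube [DecidableEq Γ.Point] (h : Γ.IsHex) (hord : Γ.HasOrder s t)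
    (hs : 0 < s) : (relMatrix Γ.Collinear ^ 3).trace =
      Fintype.card Γ.Point * (s * (t + 1)) * (s - 1) := by
  have htr : (relMatrix Γ.Collinear * relMatrix Γ.Special).trace = 0 := by
    rw [h.collinear_mul_special hord hs]
    simp [trace_relMatrix_collinear, trace_relMatrix_eq_zero (r := Γ.Special) fun _ h => h.1 rfl,
      trace_relMatrix_eq_zero (r := Γ.Opposite) fun _ h => h.1 rfl]
  rw [pow_succ', sq, h.collinear_mul_collinear hord hs, mul_add, mul_add, mul_smul_comm,
    mul_smul_comm, mul_one, ← sq, Matrix.trace_add, Matrix.trace_add, Matrix.trace_smul,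
    Matrix.trace_smul, htr, h.trace_collinear_sq hord hs, trace_relMatrix_collinear]
  simp only [smul_eq_mul, mul_zero, zero_add, add_zero]
  ring

open Polynomial in
theorem exists_isHexSpectrum [Nonempty Γ.Point] (h : Γ.IsHex) (hord : Γ.HasOrder s t)
    (hs : 0 < s) : ∃ ev : Γ.Point → ℝ, IsHexSpectrum s t ev := by
  classical
  obtain ⟨ev, htr, hroot⟩ := exists_trace_aeval_eq_sum_of_isHermitian
    (isHermitian_relMatrix (r := Γ.Collinear) fun _ _ h => h.symm)
  have sum_pow (k : ℕ) : ∑ i, ev i ^ k = (relMatrix Γ.Collinear ^ k).trace := by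
    simpa only [eval_pow, eval_X, map_pow, aeval_X] using (htr (X ^ k)).symm
  refine ⟨ev, h.card_point_eq hord hs, ?_, ?_, ?_, fun i => ?_⟩
  · simpa only [pow_one, trace_relMatrix_collinear] using sum_pow 1
  · rw [sum_pow, h.trace_collinear_sq hord hs]
  · rw [sum_pow, h.trace_collinear_cube hord hs]
  · have aeval_eq (a b c d : ℝ) : aeval (relMatrix Γ.Collinear)
        ((X - C a) * ((X + C b) * ((X - C c) ^ 2 - C d))) = (relMatrix Γ.Collinear - a • 1) *
          ((relMatrix Γ.Collinear + b • 1) * ((relMatrix Γ.Collinear - c • 1) ^ 2 - d • 1)) := by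
      simp only [map_mul, map_add, map_sub, map_pow, aeval_X, aeval_C,
        Algebra.algebraMap_eq_smul_one]
    have hann := hroot _ ((aeval_eq (s * (t + 1)) (t + 1) (s - 1) (s * t)).trans (by
      rw [h.cubic_collinear hord hs, mul_smul_comm, sub_mul, h.collinear_mul_true hord,
        smul_one_mul, sub_self, smul_zero])) i
    simpa only [eval_mul, eval_add, eval_sub, eval_pow, eval_X, eval_C] using hann

end IsHex

section FeitHigman

variable {s t : ℕ} [Nonempty Γ.Point]

theorem IsHex.card_point (h : Γ.IsHex) (hord : Γ.HasOrder s t) (hs : 0 < s) :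
    Nat.card Γ.Point = (s + 1) * (1 + s * t + s ^ 2 * t ^ 2) := by
  have := h.finite_point hord
  have := Fintype.ofFinite Γ.Point
  rw [Nat.card_eq_fintype_card]
  exact_mod_cast h.card_point_eq hord hs

theorem IsHex.dvd (h : Γ.IsHex) (hord : Γ.HasOrder s t) (hs : 0 < s) :
    s ^ 2 + s * t + t ^ 2 ∣ s ^ 3 * (1 + s * t + s ^ 2 * t ^ 2) := by
  have := h.finite_point hord
  have := Fintype.ofFinite Γ.Point
  obtain ⟨_, hev⟩ := h.exists_isHexSpectrum hord hs
  exact hev.dvd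

theorem IsHex.isSquare_mul (h : Γ.IsHex) (hord : Γ.HasOrder s t) (hs : 1 < s) (ht : 1 < t) :
    IsSquare (s * t) := by
  have := h.finite_point hord
  have := Fintype.ofFinite Γ.Point
  obtain ⟨_, hev⟩ := h.exists_isHexSpectrum hord (by omega)
  exact hev.isSquare hs ht

end FeitHigman

namespace IsSaturated

variable {s t e : ℕ} {S : Set Γ.Point}

theorem nonempty_subgeometry (h : Γ.IsSaturated s t S) : Nonempty (Γ.subgeometry S).Point :=
  let ⟨x, hx⟩ := h.nontrivial.nonempty
  ⟨x, .inl hx⟩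

theorem ncard_mem_line_subgeometry (h : Γ.IsSaturated s t S) (L : (Γ.subgeometry S).Line) :
    {x : S | x.1 ∈ Γ.pts L.1}.ncard = 1 := by
  obtain ⟨x, hx, hxL⟩ := L.2
  refine Set.ncard_eq_one.2 ⟨⟨x, hx⟩, Set.ext fun y => ⟨fun hy => ?_, ?_⟩⟩
  · exact Subtype.ext (h.eq_of_mem y.2 hx hy hxL)
  · rintro rfl
    exact hxL

theorem eq_sq_add_self (h : Γ.IsSaturated s t S) (hord : (Γ.subgeometry S).HasOrder e t)
    (he : 0 < e) : s = (e * t) ^ 2 + e * t := by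
  have := h.nonempty_subgeometry
  have := h.isHex_subgeometry.finite_point hord
  have := h.isHex_subgeometry.finite_line hord he
  have := h.finite.to_subtype
  have hS : Nat.card S = s + 1 := by exact_mod_cast h.finite.cast_ncard_eq.trans h.encard_eq
  -- The members of `S` partition the lines of the subhexagon.
  have card_lines := card_mul_eq_card_mul_of_ncard
    (fun (x : S) (L : (Γ.subgeometry S).Line) => x.1 ∈ Γ.pts L.1)
    (fun x => hord.ncard_lines ⟨x.1, .inl x.2⟩) h.ncard_mem_line_subgeometry
  have card_flags := card_mul_eq_card_mul_of_ncard
    (fun (u : (Γ.subgeometry S).Point) L => u ∈ (Γ.subgeometry S).pts L)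
    hord.ncard_lines hord.ncard_pts
  rw [mul_one, hS] at card_lines
  rw [h.isHex_subgeometry.card_point hord he, ← card_lines] at card_flags
  have hcard : 1 + e * t + e ^ 2 * t ^ 2 = s + 1 :=
    Nat.eq_of_mul_eq_mul_right (show 0 < (e + 1) * (t + 1) by positivity)
      (by linear_combination card_flags)
  linarith [mul_pow e t 2]

theorem false (h : Γ.IsSaturated s t S) : False := by
  obtain ⟨e, he, hord⟩ := h.exists_hasOrder_subgeometry
  have := h.nonempty_subgeometry
  have : Nonempty Γ.Point := h.nontrivial.nonempty.to_subtype.map Subtype.val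
  have hs := h.one_lt_s
  have ht := h.one_lt_t
  have hst := h.eq_sq_add_self hord he
  obtain rfl | he1 : e = 1 ∨ 1 < e := by omega
  · exact not_dvd_of_eq_sq_add_self ht (by simpa only [one_mul] using hst)
      (h.hex.dvd h.order (by omega))
  have hsq : IsSquare (e * t) := h.isHex_subgeometry.isSquare_mul hord he1 ht
  have hsucc : IsSquare (e * t + 1) :=
    isSquare_succ_of_eq_sq_add_self (by omega) hst (h.hex.isSquare_mul h.order hs ht)
  exact (Nat.mul_pos he (by omega)).ne' (eq_zero_of_isSquare_of_isSquare_succ hsq hsucc)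

end IsSaturated

end GenHexagon

/-- A set of `s + 1` points of a generalised hexagon of order `(s, t)`, `s, t > 1`,
admitting no opposite point, is a line, a hyperbolic line (and then `s = t`), or a
regular distance-3 trace (and then `s ≥ t`). -/
theorem blocking_set_hexagon (Γ : GenHexagon) (hΓ : Γ.IsGenHexagon) (s t : ℕ)
    (hs : 1 < s) (ht : 1 < t) (hord : Γ.HasOrder s t)
    (S : Set Γ.Point) (hS : S.encard = s + 1)
    (hblock : ¬ ∃ y : Γ.Point, ∀ x ∈ S, Γ.Opposite y x) :
    (∃ L, S = Γ.pts L) ∨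
    (Γ.IsHyperbolicLine S ∧ s = t) ∨
    ((∃ L M, Γ.OppLines L M ∧ S = Γ.trace3 L M ∧ Γ.RegularTrace3 L M) ∧ t ≤ s) := by
  have h : Γ.IsBlocking s t S :=
    ⟨hΓ.isHex, hord, hs, ht, hS, fun y => by simpa using not_exists.1 hblock y⟩
  by_cases hnc : ∀ x ∈ S, ∀ y ∈ S, ¬ Γ.Collinear x y
  swap
  · push Not at hnc
    obtain ⟨x, hx, y, hy, hne, L, hxL, hyL⟩ := hnc
    exact .inl ⟨L, h.eq_pts_of_collinear hx hy hne hxL hyL⟩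
  have h' : Γ.IsNoncollinearBlocking s t S := ⟨h, hnc⟩
  rcases (Γ.centers S).eq_empty_or_nonempty with hc | ⟨p, hp⟩
  · have hopp : S.Pairwise Γ.Opposite := h'.pairwise_opposite_of_centers_eq_empty hc
    obtain ⟨L, M, hLM, hST⟩ := h.exists_eq_trace3 hopp
    exact .inr (.inr ⟨⟨L, M, hLM, hST, h.regularTrace3 hopp hST⟩,
      h.t_le_s_of_pairwise_opposite hopp⟩)
  · have hall : ∀ w ∈ S, Γ.Collinear w p := by
      by_contra! ⟨w, hw, hwp⟩
      exact GenHexagon.IsSaturated.false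
        ⟨h', fun x hx A hxA => h'.exists_mem_centers hw hp hwp hx hxA⟩
    exact .inr (.inl ⟨h.isHyperbolicLine_of_forall_collinear hnc hall,
      h.s_eq_t_of_forall_collinear hnc hall⟩)
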